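/- Let f : (ℂⁿ,0) → (ℂⁿ⁺¹,0) be a finite holomorphic map germ with irreducible image. Then deg f ≤ mult f ≤ gd(f). -/

import Mathlib

open Filter Topology Set

noncomputable section

/-- `ℂⁿ` with its Euclidean (Hermitian) norm. -/
abbrev Cn (n : ℕ) : Type := EuclideanSpace ℂ (Fin n)

instance germAlgebra {α : Type*} (l : Filter α) : Algebra ℂ (Filter.Germ l ℂ) :=
  Algebra.ofModule
    (fun r x y => by
      induction x using Filter.Germ.inductionOn with | _ f =>
      induction y using Filter.Germ.inductionOn with | _ g =>
      rw [← Filter.Germ.coe_smul, ← Filter.Germ.coe_mul, ← Filter.Germ.coe_mul,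
        ← Filter.Germ.coe_smul, smul_mul_assoc])
    (fun r x y => by
      induction x using Filter.Germ.inductionOn with | _ f =>
      induction y using Filter.Germ.inductionOn with | _ g =>
      rw [← Filter.Germ.coe_smul, ← Filter.Germ.coe_mul, ← Filter.Germ.coe_mul,
        ← Filter.Germ.coe_smul, mul_smul_comm])

/-- The local ℂ-algebra `𝒪_n` of germs at `0` of holomorphic functions on `ℂⁿ`. -/
def Ogerm (n : ℕ) : Subalgebra ℂ (Filter.Germ (𝓝 (0 : Cn n)) ℂ) where
  carrier := {G | ∃ g : Cn n → ℂ, AnalyticAt ℂ g 0 ∧ (g : Filter.Germ (𝓝 (0 : Cn n)) ℂ) = G}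
  mul_mem' := by rintro _ _ ⟨g, hg, rfl⟩ ⟨h, hh, rfl⟩; exact ⟨g * h, hg.mul hh, rfl⟩
  add_mem' := by rintro _ _ ⟨g, hg, rfl⟩ ⟨h, hh, rfl⟩; exact ⟨g + h, hg.add hh, rfl⟩
  algebraMap_mem' := fun c => ⟨fun _ => c, analyticAt_const, by
    rw [Algebra.algebraMap_eq_smul_one, ← Filter.Germ.coe_one, ← Filter.Germ.coe_smul]
    congr 1
    funext x
    simp⟩

/-- The ideal `⟨f⟩` of `𝒪_n` generated by the coordinate functions of `f`. -/
def coordIdeal {n p : ℕ} (f : Cn n → Cn p) : Ideal (Ogerm n) :=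
  Ideal.span {G : Ogerm n | ∃ i : Fin p,
    (G : Filter.Germ (𝓝 (0 : Cn n)) ℂ) =
      ((fun x => f x i : Cn n → ℂ) : Filter.Germ (𝓝 (0 : Cn n)) ℂ)}

/-- The multiplicity `mult f = dim_ℂ 𝒪ₙ/⟨f⟩` of a map germ. -/
def multGerm {n p : ℕ} (f : Cn n → Cn p) : Cardinal :=
  Module.rank ℂ (Ogerm n ⧸ coordIdeal f)

/-- `f` is a finite map germ: `dim_ℂ 𝒪ₙ/f^*(𝔪_p)𝒪ₙ < ∞`. -/
def FiniteGerm {n p : ℕ} (f : Cn n → Cn p) : Prop :=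
  multGerm f < Cardinal.aleph0

/-- The generic degree `gd(f)`: the minimum of `dim_ℂ 𝒪ₙ/⟨π ∘ f⟩` over all surjective
linear projections `π : ℂⁿ⁺¹ → ℂⁿ`. -/
def gdGerm {n : ℕ} (f : Cn n → Cn (n+1)) : Cardinal :=
  sInf {c : Cardinal | ∃ π : Cn (n+1) →ₗ[ℂ] Cn n, Function.Surjective π ∧
    c = multGerm (fun x => π (f x))}

/-- `f` has degree `d`: on a representative, each point of a generic subset of the image
(open and dense in the image) has exactly `d` preimages. -/
def HasDeg {n p : ℕ} (f : Cn n → Cn p) (d : ℕ) : Prop :=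
  ∃ U : Set (Cn n), IsOpen U ∧ 0 ∈ U ∧ ∃ W : Set (Cn p), IsOpen W ∧
    f '' U ⊆ closure (f '' U ∩ W) ∧
    ∀ y ∈ f '' U ∩ W, Set.ncard {x ∈ U | f x = y} = d

/-- Two sets have the same germ at `p`. -/
def GermSetEq {E : Type*} [TopologicalSpace E] (p : E) (X Y : Set E) : Prop :=
  ∃ U ∈ 𝓝 p, X ∩ U = Y ∩ U

/-- `X` is a complex analytic subset of the open set `Ω`: it is closed in `Ω` and
locally the common zero set of holomorphic functions. -/
def IsAnalyticSetIn {E : Type*} [NormedAddCommGroup E] [NormedSpace ℂ E]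
    (X Ω : Set E) : Prop :=
  IsOpen Ω ∧ X ⊆ Ω ∧ IsClosed (Subtype.val ⁻¹' X : Set Ω) ∧
  ∀ p ∈ Ω, ∃ U : Set E, IsOpen U ∧ p ∈ U ∧ U ⊆ Ω ∧
    ∃ S : Set (E → ℂ), (∀ g ∈ S, AnalyticOnNhd ℂ g U) ∧
      X ∩ U = {x ∈ U | ∀ g ∈ S, g x = 0}

/-- The germ of `X` at `p` is irreducible: it is not the union of two strictly smaller
analytic germs. -/
def IrreducibleGermAt {E : Type*} [NormedAddCommGroup E] [NormedSpace ℂ E]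
    (X : Set E) (p : E) : Prop :=
  ∀ X₁ X₂ : Set E, (∃ Ω₁, p ∈ Ω₁ ∧ IsAnalyticSetIn X₁ Ω₁) →
    (∃ Ω₂, p ∈ Ω₂ ∧ IsAnalyticSetIn X₂ Ω₂) →
    GermSetEq p X (X₁ ∪ X₂) → GermSetEq p X X₁ ∨ GermSetEq p X X₂

/-- The image germ of `f` at `0` is irreducible. -/
def ImageIrreducible {n p : ℕ} (f : Cn n → Cn p) : Prop :=
  ∃ U : Set (Cn n), IsOpen U ∧ 0 ∈ U ∧ IrreducibleGermAt (f '' U) 0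

theorem dimH_le_of_anti {X Y : Type*} [MetricSpace X] [MetricSpace Y] {s : Set X} {φ : X → Y}
    {K : NNReal} (h : ∀ x ∈ s, ∀ y ∈ s, dist x y ≤ K * dist (φ x) (φ y)) :
    dimH s ≤ dimH (φ '' s) := by
  have h1 : AntilipschitzWith K (fun x : s => φ x) :=
    AntilipschitzWith.of_le_mul_dist fun x y => h x x.2 y y.2
  have h2 := h1.le_dimH_image univ
  have h3 : (fun x : s => φ x) '' univ = φ '' s := by
    rw [image_univ, image_eq_range]
  have h4 : dimH (Subtype.val '' (univ : Set s)) = dimH (univ : Set s) :=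
    isometry_subtype_coe.dimH_image univ
  rw [h3] at h2
  rw [← h4] at h2
  simpa using h2

theorem dimH_le_of_local {X : Type*} [MetricSpace X] [SecondCountableTopology X] {s : Set X}
    {c : ENNReal} (h : ∀ x ∈ s, ∃ t ∈ 𝓝[s] x, dimH t ≤ c) : dimH s ≤ c := by
  by_contra hc
  push Not at hc
  obtain ⟨x, hx, hx'⟩ := exists_mem_nhdsWithin_lt_dimH_of_lt_dimH hc
  obtain ⟨t, ht, htc⟩ := h x hx
  exact absurd (hx' t ht) (not_lt.2 htc)

theorem dimH_submodule {E : Type*} [NormedAddCommGroup E] [NormedSpace ℝ E] [FiniteDimensional ℝ E]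
    (H : Submodule ℝ E) : dimH (H : Set E) = Module.finrank ℝ H := by
  rw [← Real.dimH_univ_eq_finrank H]
  have := (isometry_subtype_coe (s := (H : Set E))).dimH_image univ
  rw [← this]
  congr 1
  ext x
  simp

section
variable {E : Type*} [NormedAddCommGroup E] [NormedSpace ℂ E] [FiniteDimensional ℂ E]

theorem dimH_ker {k : ℕ} (hE : Module.finrank ℂ E = k + 1) (g' : E →L[ℂ] ℂ) (hg' : g' ≠ 0) :
    dimH {x : E | g' x = 0} = ((2 * k : ℕ) : ENNReal) := by
  have h1 := dimH_submodule (E := E) ((LinearMap.ker g'.toLinearMap).restrictScalars ℝ)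
  have h2 : (((LinearMap.ker g'.toLinearMap).restrictScalars ℝ : Submodule ℝ E) : Set E)
      = {x : E | g' x = 0} := by
    ext x; simp
  rw [h2] at h1
  rw [h1]
  have h3 : Module.finrank ℝ ((LinearMap.ker g'.toLinearMap).restrictScalars ℝ : Submodule ℝ E)
    = 2 * Module.finrank ℂ (LinearMap.ker g'.toLinearMap) :=
      finrank_real_of_complex (LinearMap.ker g'.toLinearMap)
  have h4 := Module.Dual.finrank_ker_add_one_of_ne_zero (f := g'.toLinearMap)
    (by intro h; apply hg'; ext x; exact congrArg (fun f => f x) h)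
  have : Module.finrank ℂ (LinearMap.ker g'.toLinearMap) = k := by
    rw [hE] at h4; omega
  rw [h3, this]

theorem dimH_zero_regular {k : ℕ} (hE : Module.finrank ℂ E = k + 1) {g : E → ℂ} {p : E}
    {g' : E →L[ℂ] ℂ} (hg : HasStrictFDerivAt g g' p) (hg' : g' ≠ 0) :
    ∃ V ∈ 𝓝 p, dimH {x ∈ V | g x = 0} ≤ ((2 * k : ℕ) : ENNReal) := by
  obtain ⟨w, hw⟩ : ∃ w, g' w ≠ 0 := by
    by_contra h; push Not at h; exact hg' (ContinuousLinearMap.ext h)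
  set v : E := (g' w)⁻¹ • w with hv
  have hgv : g' v = 1 := by simp [hv, hw]
  set ε : ℝ := 1 / (2 * (‖v‖ + 1)) with hε
  have hεpos : 0 < ε := by positivity
  have h1 := hg.isLittleO.def hεpos
  rw [nhds_prod_eq] at h1
  obtain ⟨V, hV, hVV⟩ := (Filter.eventually_prod_self_iff (r := fun x y => ‖g x - g y - g' (x - y)‖ ≤ ε * ‖x - y‖)).1 h1
  refine ⟨V, hV, ?_⟩
  have hε2 : ε * ‖v‖ ≤ 1/2 := by
    rw [hε, div_mul_eq_mul_div, div_le_div_iff₀ (by positivity) (by norm_num)]; nlinarith [norm_nonneg v]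
  have key : dimH {x ∈ V | g x = 0} ≤
      dimH ((fun x => x - g' x • v) '' {x ∈ V | g x = 0}) := by
    refine dimH_le_of_anti (K := 2) ?_
    rintro x ⟨hx, hx0⟩ y ⟨hy, hy0⟩
    have := hVV x hx y hy
    simp only [hx0, hy0, sub_zero, zero_sub, norm_neg] at this
    rw [dist_eq_norm, dist_eq_norm]
    have e : x - y = ((x - g' x • v) - (y - g' y • v)) + g' (x - y) • v := by
      rw [map_sub, sub_smul]; abel
    have h3 : ‖x - y‖ ≤ ‖(x - g' x • v) - (y - g' y • v)‖ + ‖g' (x-y)‖ * ‖v‖ := by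
      conv_lhs => rw [e]
      exact (norm_add_le _ _).trans (by rw [norm_smul])
    have h4 : ‖g' (x-y)‖ * ‖v‖ ≤ (1/2) * ‖x - y‖ := by
      calc _ ≤ (ε * ‖x - y‖) * ‖v‖ := by gcongr
        _ = (ε * ‖v‖) * ‖x - y‖ := by ring
        _ ≤ _ := by gcongr
    push_cast
    linarith
  refine key.trans ?_
  rw [← dimH_ker hE g' hg']
  apply dimH_mono
  rintro _ ⟨x, hx, rfl⟩
  simp [hgv]

/-- iterated directional derivative -/
def dirD (g : E → ℂ) (v : E) : ℕ → E → ℂ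
  | 0 => g
  | (k+1) => fun x => fderiv ℂ (dirD g v k) x v

theorem dirD_analytic {g : E → ℂ} {U : Set E} (hg : AnalyticOnNhd ℂ g U) (v : E) (k : ℕ) :
    AnalyticOnNhd ℂ (dirD g v k) U := by
  induction k with
  | zero => exact hg
  | succ k ih =>
    intro x hx
    exact (ContinuousLinearMap.analyticAt (ContinuousLinearMap.apply ℂ ℂ v) _).comp (ih x hx).fderiv

theorem dimH_zero_analytic {k : ℕ} (hE : Module.finrank ℂ E = k + 1) {g : E → ℂ} {U : Set E}
    (hU : IsOpen U) (hUc : IsPreconnected U) (hg : AnalyticOnNhd ℂ g U)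
    (hne : ∃ x ∈ U, g x ≠ 0) : dimH {x ∈ U | g x = 0} ≤ ((2 * k : ℕ) : ENNReal) := by
  have : SecondCountableTopology E := by
    have := FiniteDimensional.proper ℂ E
    infer_instance
  apply dimH_le_of_local
  rintro p ⟨hp, hp0⟩
  obtain ⟨ρ, hρ, hB⟩ := Metric.isOpen_iff.1 hU p hp
  obtain ⟨w, hw, hgw⟩ : ∃ w ∈ Metric.ball p (ρ/4), g w ≠ 0 := by
    by_contra hcon
    push Not at hcon
    have hz : g =ᶠ[𝓝 p] 0 := by
      filter_upwards [Metric.ball_mem_nhds p (show 0 < ρ/4 by positivity)] with x hx using hcon x hx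
    obtain ⟨x, hx, hx0⟩ := hne
    exact hx0 (hg.eqOn_zero_of_preconnected_of_eventuallyEq_zero hUc hp hz hx)
  set v := w - p with hv
  have hvn : ‖v‖ < ρ/4 := by rw [hv, ← dist_eq_norm]; exact hw
  have hN : {q | q ∈ Metric.ball p (ρ/4) ∧ g (q + v) ≠ 0} ∈ 𝓝 p := by
    have hc : ContinuousAt (fun q => g (q + v)) p := by
      have hwU : p + v ∈ U := by
        apply hB
        rw [hv, add_sub_cancel]
        exact Metric.ball_subset_ball (by linarith) hw
      exact ContinuousAt.comp (f := fun q => q + v) (hg _ hwU).continuousAt (by fun_prop)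
    refine Filter.inter_mem (Metric.ball_mem_nhds p (by positivity)) ?_
    apply hc.eventually_ne
    simpa [hv] using hgw
  refine ⟨{q | q ∈ Metric.ball p (ρ/4) ∧ g (q + v) ≠ 0} ∩ {x ∈ U | g x = 0},
    inter_mem (mem_nhdsWithin_of_mem_nhds hN) self_mem_nhdsWithin, ?_⟩
  have hsub : {q | q ∈ Metric.ball p (ρ/4) ∧ g (q + v) ≠ 0} ∩ {x ∈ U | g x = 0} ⊆
      ⋃ j : ℕ, {x ∈ U | dirD g v j x = 0 ∧ dirD g v (j+1) x ≠ 0} := by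
    rintro q ⟨⟨hq, hqv⟩, hqU, hq0⟩
    have hline : ∀ t ∈ Metric.ball (0:ℂ) 2, q + t • v ∈ U := by
      intro t ht
      apply hB
      rw [Metric.mem_ball, dist_eq_norm] at *
      rw [sub_zero] at ht
      have : ‖t • v‖ ≤ 2 * (ρ/4) := by
        rw [norm_smul]; gcongr
      calc ‖q + t • v - p‖ = ‖(q - p) + t • v‖ := by congr 1; abel
        _ ≤ ‖q - p‖ + ‖t • v‖ := norm_add_le _ _
        _ < ρ := by linarith
    have hlin : ∀ t : ℂ, HasDerivAt (fun t : ℂ => q + t • v) v t := by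
      intro t
      simpa using ((hasDerivAt_id t).smul_const v).const_add q
    have hφ : AnalyticOnNhd ℂ (fun t : ℂ => g (q + t • v)) (Metric.ball 0 2) := by
      intro t ht
      exact AnalyticAt.fun_comp (hg _ (hline t ht)) (by fun_prop)
    have hit : ∀ j, ∀ t ∈ Metric.ball (0:ℂ) 2,
        iteratedDeriv j (fun t : ℂ => g (q + t • v)) t = dirD g v j (q + t • v) := by
      intro j
      induction j with
      | zero => intro t ht; simp [dirD]
      | succ j ih =>
        intro t ht
        rw [iteratedDeriv_succ]
        have e : iteratedDeriv j (fun t : ℂ => g (q + t • v)) =ᶠ[𝓝 t]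
            fun t => dirD g v j (q + t • v) := by
          filter_upwards [Metric.isOpen_ball.mem_nhds ht] with s hs using ih s hs
        rw [e.deriv_eq]
        have hd := (dirD_analytic hg v j _ (hline t ht)).differentiableAt.hasFDerivAt
        exact (hd.comp_hasDerivAt t (hlin t)).deriv
    have h0 : (0:ℂ) ∈ Metric.ball (0:ℂ) 2 := by simp
    have hord : analyticOrderAt (fun t : ℂ => g (q + t • v)) 0 ≠ ⊤ := by
      intro htop
      rw [analyticOrderAt_eq_top] at htop
      have := hφ.eqOn_zero_of_preconnected_of_eventuallyEq_zero
        (convex_ball (0:ℂ) 2).isPreconnected h0 htop (show (1:ℂ) ∈ Metric.ball (0:ℂ) 2 by simp)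
      simp at this
      exact hqv this
    have hex : ∃ j, iteratedDeriv j (fun t : ℂ => g (q + t • v)) 0 ≠ 0 := by
      by_contra hcon
      push Not at hcon
      apply hord
      rw [ENat.eq_top_iff_forall_ge]
      intro m
      rw [natCast_le_analyticOrderAt_iff_iteratedDeriv_eq_zero (hφ 0 h0)]
      intro i _
      exact hcon i
    classical
    obtain ⟨j, hj, hmin⟩ : ∃ j, iteratedDeriv j (fun t : ℂ => g (q + t • v)) 0 ≠ 0 ∧
        ∀ i < j, iteratedDeriv i (fun t : ℂ => g (q + t • v)) 0 = 0 :=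
      ⟨Nat.find hex, Nat.find_spec hex, fun i hi => not_not.1 (Nat.find_min hex hi)⟩
    rcases j with _ | j
    · exfalso; apply hj; simp [hq0]
    · rw [mem_iUnion]
      refine ⟨j, hqU, ?_, ?_⟩
      · have := hmin j (by omega)
        rw [hit j 0 h0] at this
        simpa using this
      · rw [hit (j+1) 0 h0] at hj
        simpa using hj
  refine (dimH_mono hsub).trans ?_
  rw [dimH_iUnion]
  refine iSup_le fun j => ?_
  apply dimH_le_of_local
  rintro x ⟨hxU, hx0, hx1⟩
  have hs := (dirD_analytic hg v j x hxU).hasStrictFDerivAt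
  have hne : fderiv ℂ (dirD g v j) x ≠ 0 := by
    intro h; apply hx1; simp [dirD, h]
  obtain ⟨V, hV, hd⟩ := dimH_zero_regular hE hs hne
  refine ⟨V ∩ {x ∈ U | dirD g v j x = 0 ∧ dirD g v (j+1) x ≠ 0},
    inter_mem (mem_nhdsWithin_of_mem_nhds hV) self_mem_nhdsWithin, ?_⟩
  refine (dimH_mono ?_).trans hd
  rintro y ⟨hy, _, hy0, _⟩
  exact ⟨hy, hy0⟩

theorem dense_compl_small {k : ℕ} (hE : Module.finrank ℂ E = k + 1) {C : Set E}
    (hC : dimH C ≤ ((2 * k : ℕ) : ENNReal)) : Dense Cᶜ := by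
  apply dense_compl_of_dimH_lt_finrank
  refine hC.trans_lt ?_
  rw [finrank_real_of_complex, hE]
  exact_mod_cast (by omega : 2 * k < 2 * (k+1))

theorem preconn_compl_small {k : ℕ} (hE : Module.finrank ℂ E = k + 1) {C V : Set E}
    (hC : dimH C ≤ ((2 * k : ℕ) : ENNReal)) (hV : Convex ℝ V) (hVC : IsOpen (V \ C)) :
    IsPreconnected (V \ C) := by
  apply isPreconnected_of_forall_pair
  intro a ha b hb
  by_cases hab : a = b
  · subst hab; exact ⟨{a}, by simpa using ha, by simp, by simp, isPreconnected_singleton⟩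
  set v := b - a with hv
  have hv0 : v ≠ 0 := sub_ne_zero.2 (Ne.symm hab)
  obtain ⟨l, hl⟩ := SeparatingDual.exists_eq_one (R := ℝ) hv0
  let H : Submodule ℝ E := LinearMap.ker l.toLinearMap
  have hH : Module.finrank ℝ H = 2 * k + 1 := by
    have h4 := Module.Dual.finrank_ker_add_one_of_ne_zero (f := l.toLinearMap)
      (by intro h; have := congrArg (fun f => f v) h; simp [hl] at this)
    rw [finrank_real_of_complex, hE] at h4
    show Module.finrank ℝ (LinearMap.ker l.toLinearMap) = _
    omega
  let ψ : E →L[ℝ] H := (ContinuousLinearMap.id ℝ E - l.smulRight v).codRestrict H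
    (by intro x; simp [H, hl])
  have hψ : ∀ x, ((ψ x : H) : E) = x - l x • v := fun x => rfl
  have hdim : dimH (ψ '' C) < Module.finrank ℝ H := by
    refine (ψ.lipschitz.dimH_image_le C).trans_lt (hC.trans_lt ?_)
    rw [hH]
    exact_mod_cast (by omega : 2 * k < 2 * k + 1)
  have hdense := dense_compl_of_dimH_lt_finrank hdim
  obtain ⟨ε, hε, hεa⟩ := Metric.isOpen_iff.1 hVC a ha
  obtain ⟨ε', hε', hεb⟩ := Metric.isOpen_iff.1 hVC b hb
  obtain ⟨u', hu', hdu⟩ := hdense.exists_dist_lt (ψ a) (lt_min hε hε')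
  set u : E := ((u' - ψ a : H) : E) with hu
  have hun : ‖u‖ < min ε ε' := by
    rw [dist_comm, dist_eq_norm] at hdu; exact hdu
  have hlu : l u = 0 := (u' - ψ a : H).2
  have hψu : ψ u = u' - ψ a := by
    apply Subtype.ext; rw [hψ, hlu]; simp [hu]
  have hψv : ψ v = 0 := by
    apply Subtype.ext; rw [hψ, hl]; simp
  have ha' : a + u ∈ Metric.ball a ε := by
    simp; exact hun.trans_le (min_le_left _ _)
  have hb' : b + u ∈ Metric.ball b ε' := by
    simp; exact hun.trans_le (min_le_right _ _)
  have hseg : segment ℝ (a + u) (b + u) ⊆ V \ C := by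
    intro x hx
    refine ⟨hV.segment_subset (hεa ha').1 (hεb hb').1 hx, fun hxC => ?_⟩
    rw [segment_eq_image'] at hx
    obtain ⟨t, -, rfl⟩ := hx
    apply hu'
    refine ⟨_, hxC, ?_⟩
    have : a + u + t • (b + u - (a + u)) = a + u + t • v := by
      rw [hv]; congr 2; abel
    simp only [this, map_add, map_smul, hψu, hψv]
    simp
  have c1 := ((convex_ball a ε).segment_subset (Metric.mem_ball_self hε) ha').trans hεa
  have c2 := ((convex_ball b ε').segment_subset hb' (Metric.mem_ball_self hε')).trans hεb
  refine ⟨segment ℝ a (a+u) ∪ segment ℝ (a+u) (b+u) ∪ segment ℝ (b+u) b,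
    union_subset (union_subset c1 hseg) c2, Or.inl (Or.inl (left_mem_segment _ _ _)),
    Or.inr (right_mem_segment _ _ _), ?_⟩
  refine IsPreconnected.union (b+u) (Or.inr (right_mem_segment _ _ _)) (left_mem_segment _ _ _)
    (IsPreconnected.union (a+u) (right_mem_segment _ _ _) (left_mem_segment _ _ _)
     (convex_segment _ _).isPreconnected (convex_segment _ _).isPreconnected)
    (convex_segment _ _).isPreconnected

end

section
variable {E : Type*} [NormedAddCommGroup E] [NormedSpace ℂ E] [FiniteDimensional ℂ E]
variable {F : Type*} [NormedAddCommGroup F] [NormedSpace ℂ F] [FiniteDimensional ℂ F]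

theorem equiv_of_injective (hfr : Module.finrank ℂ E = Module.finrank ℂ F) (A : E →L[ℂ] F)
    (hA : Function.Injective A) : ∃ e : E ≃L[ℂ] F, (e : E →L[ℂ] F) = A := by
  refine ⟨(LinearEquiv.ofInjectiveOfFinrankEq A.toLinearMap hA hfr).toContinuousLinearEquiv, ?_⟩
  ext x
  rfl

theorem local_inverse (hfr : Module.finrank ℂ E = Module.finrank ℂ F) {Φ : E → F} {x0 : E}
    (hΦ : AnalyticAt ℂ Φ x0) (hinj : Function.Injective (fderiv ℂ Φ x0)) :
    ∃ Ψ : F → E, AnalyticAt ℂ Ψ (Φ x0) ∧ Ψ (Φ x0) = x0 ∧ (∀ᶠ y in 𝓝 (Φ x0), Φ (Ψ y) = y) ∧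
      ∀ᶠ x in 𝓝 x0, Ψ (Φ x) = x := by
  have : CompleteSpace E := FiniteDimensional.complete ℂ E
  have : CompleteSpace F := FiniteDimensional.complete ℂ F
  obtain ⟨e, he⟩ := equiv_of_injective hfr _ hinj
  have hs : HasStrictFDerivAt Φ (e : E →L[ℂ] F) x0 := by rw [he]; exact hΦ.hasStrictFDerivAt
  refine ⟨hs.localInverse Φ e x0, ?_, hs.localInverse_apply_image, hs.eventually_right_inverse,
    hs.eventually_left_inverse⟩
  exact (hs.toOpenPartialHomeomorph Φ).analyticAt_symm' hs.mem_toOpenPartialHomeomorph_source hΦ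
    he.symm

theorem anti_of_injective {f : E → F} {x : E} {f' : E →L[ℂ] F} (hf : HasStrictFDerivAt f f' x)
    (hinj : Function.Injective f') :
    ∃ K : NNReal, ∃ V ∈ 𝓝 x, ∀ a ∈ V, ∀ b ∈ V, dist a b ≤ K * dist (f a) (f b) := by
  obtain ⟨K, -, hK⟩ := f'.toLinearMap.exists_antilipschitzWith (LinearMap.ker_eq_bot.2 hinj)
  set ε : ℝ := 1 / (2 * (K + 1)) with hε
  have hεpos : 0 < ε := by positivity
  have h1 := hf.isLittleO.def hεpos
  rw [nhds_prod_eq] at h1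
  obtain ⟨V, hV, hVV⟩ := (Filter.eventually_prod_self_iff
    (r := fun x y => ‖f x - f y - f' (x - y)‖ ≤ ε * ‖x - y‖)).1 h1
  refine ⟨2 * K, V, hV, ?_⟩
  intro a ha b hb
  have h2 := hVV a ha b hb
  have h3 : ‖a - b‖ ≤ K * ‖f' (a - b)‖ := by
    have := hK.le_mul_dist (a - b) 0
    simpa using this
  have hKε : K * ε ≤ 1 / 2 := by
    rw [hε, mul_one_div, div_le_div_iff₀ (by positivity) (by norm_num)]
    nlinarith [K.2]
  have h4 : ‖f' (a - b)‖ ≤ ‖f a - f b‖ + ε * ‖a - b‖ := by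
    calc ‖f' (a - b)‖ = ‖(f a - f b) - (f a - f b - f' (a - b))‖ := by congr 1; abel
      _ ≤ _ := (norm_sub_le _ _).trans (by gcongr)
  rw [dist_eq_norm, dist_eq_norm]
  have h5 : ‖a - b‖ ≤ K * ‖f a - f b‖ + (K * ε) * ‖a - b‖ := by
    calc _ ≤ _ := h3
      _ ≤ K * (‖f a - f b‖ + ε * ‖a - b‖) := by gcongr
      _ = _ := by ring
  have h6 : (K * ε) * ‖a - b‖ ≤ 1/2 * ‖a - b‖ := by gcongr
  push_cast
  linarith

theorem exists_immersive {f : E → F} {U : Set E} (hU : IsOpen U) (hne : U.Nonempty)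
    (hf : AnalyticOnNhd ℂ f U) (hfin : ∀ y, {x ∈ U | f x = y}.Finite) :
    ∃ x0 ∈ U, Function.Injective (fderiv ℂ f x0) := by
  have : CompleteSpace E := FiniteDimensional.complete ℂ E
  have : CompleteSpace F := FiniteDimensional.complete ℂ F
  let rk : E → ℕ := fun x => Module.finrank ℂ (LinearMap.range (fderiv ℂ f x).toLinearMap)
  obtain ⟨x0, hx0, hmax⟩ : ∃ x0 ∈ U, ∀ x ∈ U, rk x ≤ rk x0 := by
    have hb : BddAbove (rk '' U) := ⟨Module.finrank ℂ F, by
      rintro _ ⟨x, -, rfl⟩; exact Submodule.finrank_le _⟩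
    obtain ⟨x0, hx0, h⟩ := Nat.sSup_mem (hne.image rk) hb
    exact ⟨x0, hx0, fun x hx => by rw [h]; exact le_csSup hb ⟨x, hx, rfl⟩⟩
  refine ⟨x0, hx0, ?_⟩
  by_contra hninj
  let A := fderiv ℂ f x0
  let K := LinearMap.ker A.toLinearMap
  let R0 := LinearMap.range A.toLinearMap
  obtain ⟨v, hvK, hv0⟩ : ∃ v ∈ K, v ≠ 0 := by
    apply Submodule.exists_mem_ne_zero_of_ne_bot
    intro h
    exact hninj (LinearMap.ker_eq_bot.1 h)
  obtain ⟨L', hL'⟩ := R0.subtype.exists_leftInverse_of_injective R0.ker_subtype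
  obtain ⟨Q', hQ'⟩ := K.subtype.exists_leftInverse_of_injective K.ker_subtype
  let L : F →L[ℂ] R0 := L'.toContinuousLinearMap
  let Q : E →L[ℂ] K := Q'.toContinuousLinearMap
  have hL : ∀ z : R0, L z = z := fun z => congrArg (fun g => g z) hL'
  have hQ : ∀ z : K, Q z = z := fun z => congrArg (fun g => g z) hQ'
  let Φ : E → R0 × K := fun x => (L (f x), Q x)
  have hΦa : ∀ x ∈ U, AnalyticAt ℂ Φ x := fun x hx =>
    ((L.analyticAt _).comp (hf x hx)).prod (Q.analyticAt x)
  have hΦd : ∀ x ∈ U, fderiv ℂ Φ x = (L.comp (fderiv ℂ f x)).prod Q := by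
    intro x hx
    apply HasFDerivAt.fderiv
    exact (L.hasFDerivAt.comp x (hf x hx).differentiableAt.hasFDerivAt).prodMk Q.hasFDerivAt
  have hinj : Function.Injective (fderiv ℂ Φ x0) := by
    rw [hΦd x0 hx0, injective_iff_map_eq_zero]
    intro w hw
    have h1 : L (A w) = 0 := congrArg Prod.fst hw
    have h2 : Q w = 0 := congrArg Prod.snd hw
    have h3 : A w = 0 := by
      have := hL ⟨A w, LinearMap.mem_range_self A.toLinearMap w⟩
      rw [h1] at this
      exact (congrArg Subtype.val this).symm
    have := hQ ⟨w, h3⟩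
    rw [h2] at this
    exact (congrArg Subtype.val this).symm
  have hfr : Module.finrank ℂ E = Module.finrank ℂ (R0 × K) := by
    rw [Module.finrank_prod]
    exact (LinearMap.finrank_range_add_finrank_ker A.toLinearMap).symm
  obtain ⟨e, he⟩ := equiv_of_injective hfr _ hinj
  obtain ⟨Ψ, hΨa, hΨ0, hΨr, -⟩ := local_inverse hfr (hΦa x0 hx0) hinj
  -- kernel condition near x0
  have hker : ∀ᶠ x in 𝓝 x0, x ∈ U ∧ ∀ w, L (fderiv ℂ f x w) = 0 → fderiv ℂ f x w = 0 := by
    have h1 : ∀ᶠ x in 𝓝 x0, fderiv ℂ Φ x ∈ range ((↑) : (E ≃L[ℂ] R0 × K) → E →L[ℂ] R0 × K) := by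
      have hc : ContinuousAt (fderiv ℂ Φ) x0 := (hΦa x0 hx0).fderiv.continuousAt
      apply hc.eventually_mem
      rw [← he]
      exact ContinuousLinearEquiv.nhds e
    filter_upwards [h1, hU.mem_nhds hx0] with x ⟨ex, hex⟩ hxU
    refine ⟨hxU, ?_⟩
    let M := LinearMap.range (fderiv ℂ f x).toLinearMap
    have hsurj : Function.Surjective (L.toLinearMap.domRestrict M) := by
      intro z
      refine ⟨⟨fderiv ℂ f x (ex.symm (z, 0)), LinearMap.mem_range_self (fderiv ℂ f x).toLinearMap _⟩, ?_⟩
      have : fderiv ℂ Φ x (ex.symm (z,0)) = (z, 0) := by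
        rw [← hex]; simp
      rw [hΦd x hxU] at this
      exact congrArg Prod.fst this
    have hdim := LinearMap.finrank_range_add_finrank_ker (L.toLinearMap.domRestrict M)
    rw [LinearMap.range_eq_top.2 hsurj, finrank_top] at hdim
    have hle : Module.finrank ℂ M ≤ Module.finrank ℂ R0 := hmax x hxU
    have hk0 : Module.finrank ℂ (LinearMap.ker (L.toLinearMap.domRestrict M)) = 0 := by omega
    have hkb := Submodule.finrank_eq_zero.1 hk0
    intro w hw
    have : (⟨fderiv ℂ f x w, LinearMap.mem_range_self (fderiv ℂ f x).toLinearMap w⟩ : M) ∈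
        LinearMap.ker (L.toLinearMap.domRestrict M) := hw
    rw [hkb, Submodule.mem_bot] at this
    exact congrArg Subtype.val this
  let c : ℂ → R0 × K := fun t => Φ x0 + (0, t • ⟨v, hvK⟩)
  have hcd : ∀ t, HasDerivAt c (0, ⟨v, hvK⟩) t := by
    intro t
    have h1 : HasDerivAt (fun t : ℂ => t • (⟨v, hvK⟩ : K)) ⟨v, hvK⟩ t := by
      simpa using (hasDerivAt_id t).smul_const (⟨v, hvK⟩ : K)
    exact ((hasDerivAt_const t (0:R0)).prodMk h1).const_add (Φ x0)
  have hc0 : c 0 = Φ x0 := by simp [c]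
  have hct : Tendsto c (𝓝 0) (𝓝 (Φ x0)) := by
    have := (hcd 0).continuousAt.tendsto; rwa [hc0] at this
  have hev : ∀ᶠ t in 𝓝 (0:ℂ), AnalyticAt ℂ Ψ (c t) ∧ (∀ᶠ y in 𝓝 (c t), Φ (Ψ y) = y) ∧
      (Ψ (c t) ∈ U ∧ ∀ w, L (fderiv ℂ f (Ψ (c t)) w) = 0 → fderiv ℂ f (Ψ (c t)) w = 0) := by
    have h1 := hct.eventually hΨa.eventually_analyticAt
    have h2 := hct.eventually hΨr.eventually_nhds
    have h3 : Tendsto Ψ (𝓝 (Φ x0)) (𝓝 x0) := by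
      have := hΨa.continuousAt.tendsto; rwa [hΨ0] at this
    have h4 := (h3.comp hct).eventually hker
    filter_upwards [h1, h2, h4] with t a b c using ⟨a, b, c⟩
  obtain ⟨ρ, hρ, hball⟩ := Metric.eventually_nhds_iff_ball.1 hev
  let γ : ℂ → E := fun t => Ψ (c t)
  have hd : ∀ t ∈ Metric.ball (0:ℂ) ρ, HasDerivAt (fun t => f (γ t)) 0 t := by
    intro t ht
    obtain ⟨ha, hb, hUt, hk⟩ := hball t ht
    have hγ : HasDerivAt γ (fderiv ℂ Ψ (c t) (0, ⟨v, hvK⟩)) t :=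
      ha.differentiableAt.hasFDerivAt.comp_hasDerivAt t (hcd t)
    have h1 : HasDerivAt (fun t => Φ (γ t)) (fderiv ℂ Φ (γ t) (fderiv ℂ Ψ (c t) (0, ⟨v, hvK⟩))) t :=
      (hΦa _ hUt).differentiableAt.hasFDerivAt.comp_hasDerivAt t hγ
    have h2 : (fun t => Φ (γ t)) =ᶠ[𝓝 t] c := (hcd t).continuousAt.tendsto.eventually hb
    have h3 := (h1.congr_of_eventuallyEq h2.symm).unique (hcd t)
    rw [hΦd _ hUt] at h3
    have h4 := hk _ (congrArg Prod.fst h3)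
    have := (hf _ hUt).differentiableAt.hasFDerivAt.comp_hasDerivAt t hγ
    rw [h4] at this
    exact this
  have hconst : ∀ t ∈ Metric.ball (0:ℂ) ρ, f (γ t) = f (γ 0) := by
    intro t ht
    exact Metric.isOpen_ball.is_const_of_deriv_eq_zero (convex_ball (0:ℂ) ρ).isPreconnected
      (fun s hs => (hd s hs).differentiableAt.differentiableWithinAt)
      (fun s hs => (hd s hs).deriv) ht (Metric.mem_ball_self hρ)
  have hγinj : InjOn γ (Metric.ball 0 ρ) := by
    intro s hs t ht hst
    have hs' := (hball s hs).2.1.self_of_nhds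
    have ht' := (hball t ht).2.1.self_of_nhds
    have : c s = c t := by rw [← hs', ← ht']; exact congrArg Φ hst
    have h2 := congrArg Prod.snd this
    simp only [c, Prod.snd_add, add_right_inj] at h2
    exact smul_left_injective ℂ (m := (⟨v, hvK⟩ : K)) (by simpa [Subtype.ext_iff] using hv0) h2
  refine Set.infinite_of_injOn_mapsTo hγinj ?_ (infinite_of_mem_nhds (0:ℂ)
    (Metric.ball_mem_nhds _ hρ)) (hfin (f (γ 0)))
  intro t ht
  exact ⟨(hball t ht).2.2.1, hconst t ht⟩

theorem local_hypersurface (hfr : Module.finrank ℂ E + 1 = Module.finrank ℂ F) {f : E → F} {x : E}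
    (hf : AnalyticAt ℂ f x) (hinj : Function.Injective (fderiv ℂ f x)) :
    ∃ h : F → ℂ, ∃ ψ : F → E, AnalyticAt ℂ h (f x) ∧ ContinuousAt ψ (f x) ∧ ψ (f x) = x ∧
      (∀ᶠ y in 𝓝 (f x), h y = 0 → f (ψ y) = y) ∧ ∀ᶠ x' in 𝓝 x, h (f x') = 0 := by
  have : CompleteSpace E := FiniteDimensional.complete ℂ E
  have : CompleteSpace F := FiniteDimensional.complete ℂ F
  let A := fderiv ℂ f x
  obtain ⟨v, hv⟩ : ∃ v, v ∉ LinearMap.range A.toLinearMap := by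
    by_contra hcon
    push Not at hcon
    have h1 := LinearMap.finrank_range_of_inj (f := A.toLinearMap) hinj
    rw [(Submodule.eq_top_iff').2 hcon, finrank_top] at h1
    omega
  let Φ : E × ℂ → F := fun q => f q.1 + q.2 • v
  have hΦa : AnalyticAt ℂ Φ (x, 0) := by
    refine AnalyticAt.add ?_ ?_
    · exact AnalyticAt.fun_comp (g := f) (f := fun q : E × ℂ => q.1) hf analyticAt_fst
    · exact analyticAt_snd.smul analyticAt_const
  have hΦ0 : Φ (x, 0) = f x := by simp [Φ]
  have hΦd : fderiv ℂ Φ (x, 0) = A.comp (ContinuousLinearMap.fst ℂ E ℂ) +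
      (ContinuousLinearMap.snd ℂ E ℂ).smulRight v := by
    apply HasFDerivAt.fderiv
    refine HasFDerivAt.add ?_ ?_
    · exact HasFDerivAt.comp (x := ((x, 0) : E × ℂ)) (g := f) (f := fun q : E × ℂ => q.1)
        hf.differentiableAt.hasFDerivAt hasFDerivAt_fst
    · exact ((ContinuousLinearMap.snd ℂ E ℂ).smulRight v).hasFDerivAt
  have hΦinj : Function.Injective (fderiv ℂ Φ (x, 0)) := by
    rw [hΦd, injective_iff_map_eq_zero]
    rintro ⟨w, t⟩ hw
    have hw' : A w + t • v = 0 := hw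
    have ht : t = 0 := by
      by_contra ht
      apply hv
      refine ⟨-(t⁻¹ • w), ?_⟩
      have : t • v = - A w := by rw [eq_neg_iff_add_eq_zero, add_comm]; exact hw'
      have h2 : v = t⁻¹ • (t • v) := by rw [smul_smul, inv_mul_cancel₀ ht, one_smul]
      rw [h2, this]; simp
    subst ht
    have : w = 0 := by
      apply hinj
      simpa using hw'
    simp [this]
  obtain ⟨Ψ, hΨa, hΨ0, hΨr, hΨl⟩ := local_inverse (by simpa using hfr) hΦa hΦinj
  rw [hΦ0] at hΨa hΨ0 hΨr
  refine ⟨fun y => (Ψ y).2, fun y => (Ψ y).1, ?_, ?_, by simp [hΨ0], ?_, ?_⟩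
  · exact AnalyticAt.fun_comp (g := Prod.snd) analyticAt_snd hΨa
  · exact continuousAt_fst.comp hΨa.continuousAt
  · filter_upwards [hΨr] with y hy h0
    have hy' : f (Ψ y).1 + (Ψ y).2 • v = y := hy
    rw [h0, zero_smul, add_zero] at hy'
    exact hy'
  · have hc : ContinuousAt (fun x' : E => (x', (0:ℂ))) x := by fun_prop
    filter_upwards [hc.eventually hΨl] with x' hx'
    simp only [Φ, zero_smul, add_zero] at hx'
    rw [hx']
end

section
variable {E : Type*} [NormedAddCommGroup E] [NormedSpace ℂ E] [FiniteDimensional ℂ E]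
variable {F : Type*} [NormedAddCommGroup F] [NormedSpace ℂ F] [FiniteDimensional ℂ F]

theorem det_analytic {A : E → (E →L[ℂ] E)} {x : E} (hA : AnalyticAt ℂ A x) :
    AnalyticAt ℂ (fun x => LinearMap.det (A x).toLinearMap) x := by
  let b := Module.finBasis ℂ E
  have h1 : (fun x => LinearMap.det (A x).toLinearMap) =
      fun x => (LinearMap.toMatrix b b (A x).toLinearMap).det := by
    funext x; rw [LinearMap.det_toMatrix]
  rw [h1]
  have hent : ∀ i j, AnalyticAt ℂ (fun x => LinearMap.toMatrix b b (A x).toLinearMap i j) x := by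
    intro i j
    have h2 : (fun x => LinearMap.toMatrix b b (A x).toLinearMap i j) =
        fun x => (b.coord i).toContinuousLinearMap (A x (b j)) := by
      funext x; simp [LinearMap.toMatrix_apply]
    rw [h2]
    refine ((b.coord i).toContinuousLinearMap.analyticAt _).fun_comp ?_
    exact ((ContinuousLinearMap.apply ℂ E (b j)).analyticAt _).fun_comp hA
  simp only [Matrix.det_apply]
  refine Finset.analyticAt_fun_sum _ fun σ _ => ?_
  have : (fun x => Equiv.Perm.sign σ • ∏ i, LinearMap.toMatrix b b (A x).toLinearMap (σ i) i) =
    fun x => ((Equiv.Perm.sign σ : ℤ) : ℂ) * ∏ i, LinearMap.toMatrix b b (A x).toLinearMap (σ i) i := by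
    funext x; simp [Units.smul_def]
  rw [this]
  exact analyticAt_const.mul (Finset.analyticAt_fun_prod _ fun i _ => hent _ _)

theorem dimH_saturate {f : E → F} {U C : Set E} (hf : AnalyticOnNhd ℂ f U) {c : ENNReal}
    (hCU : C ⊆ U) (hC : dimH C ≤ c)
    (himm : ∀ x ∈ U, x ∉ C → Function.Injective (fderiv ℂ f x)) :
    dimH {x ∈ U | f x ∈ f '' C} ≤ c := by
  have : ProperSpace E := FiniteDimensional.proper ℂ E
  have : CompleteSpace F := FiniteDimensional.complete ℂ F
  have hfC : dimH (f '' C) ≤ c := by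
    refine le_trans (dimH_image_le_of_locally_lipschitzOn fun x hx => ?_) hC
    obtain ⟨K, t, ht, h⟩ := (hf x (hCU hx)).hasStrictFDerivAt.exists_lipschitzOnWith
    exact ⟨K, t, mem_nhdsWithin_of_mem_nhds ht, h⟩
  have hsub : {x ∈ U | f x ∈ f '' C} ⊆ C ∪ {x ∈ U | f x ∈ f '' C ∧ x ∉ C} := by
    rintro x ⟨h1, h2⟩
    by_cases hx : x ∈ C
    · exact Or.inl hx
    · exact Or.inr ⟨h1, h2, hx⟩
  refine (dimH_mono hsub).trans ?_
  rw [dimH_union]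
  refine max_le hC ?_
  apply dimH_le_of_local
  rintro x ⟨hx, hxC, hxn⟩
  obtain ⟨K, V, hV, hanti⟩ := anti_of_injective (hf x hx).hasStrictFDerivAt (himm x hx hxn)
  refine ⟨V ∩ {x ∈ U | f x ∈ f '' C ∧ x ∉ C},
    inter_mem (mem_nhdsWithin_of_mem_nhds hV) self_mem_nhdsWithin, ?_⟩
  refine (dimH_le_of_anti (φ := f) (K := K) fun a ha b hb => hanti a ha.1 b hb.1).trans ?_
  refine (dimH_mono ?_).trans hfC
  rintro _ ⟨a, ha, rfl⟩
  exact ha.2.2.1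

/-- A proper analytic representative. -/
structure GoodRep (f : E → F) (U : Set E) (B : Set F) : Prop where
  openU : IsOpen U
  conn : IsPreconnected U
  openB : IsOpen B
  maps : ∀ x ∈ U, f x ∈ B
  cpt : IsCompact (closure U)
  cont : ContinuousOn f (closure U)
  bdry : ∀ x ∈ closure U, f x ∈ B → x ∈ U
  an : AnalyticOnNhd ℂ f U
  fin : ∀ y, {x ∈ U | f x = y}.Finite

theorem GoodRep.tube {f : E → F} {U : Set E} {B : Set F} (h : GoodRep f U B) {y : F} (hy : y ∈ B)
    {O : Set E} (hO : IsOpen O) (hfib : ∀ x ∈ U, f x = y → x ∈ O) :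
    ∀ᶠ y' in 𝓝 y, ∀ x ∈ U, f x = y' → x ∈ O := by
  have hc : IsCompact (closure U \ O) := h.cpt.diff hO
  have hi : IsClosed (f '' (closure U \ O)) :=
    (hc.image_of_continuousOn (h.cont.mono diff_subset)).isClosed
  have hyn : y ∉ f '' (closure U \ O) := by
    rintro ⟨x, ⟨hx, hxO⟩, rfl⟩
    exact hxO (hfib x (h.bdry x hx hy) rfl)
  filter_upwards [hi.isOpen_compl.mem_nhds hyn] with y' hy' x hx hxy
  by_contra hxO
  exact hy' ⟨x, ⟨subset_closure hx, hxO⟩, hxy⟩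

theorem GoodRep.image_closed {f : E → F} {U : Set E} {B : Set F} (h : GoodRep f U B)
    {C : Set E} (hCU : C ⊆ U) (hC : IsOpen (U \ C)) : IsOpen (B \ f '' C) := by
  rw [isOpen_iff_mem_nhds]
  rintro y ⟨hy, hyC⟩
  filter_upwards [h.openB.mem_nhds hy, h.tube hy hC
    (fun x hx hxy => ⟨hx, fun hxC => hyC ⟨x, hxC, hxy⟩⟩)] with y' h1 h2
  refine ⟨h1, ?_⟩
  rintro ⟨x, hx, rfl⟩
  exact (h2 x (hCU hx) rfl).2 hx

theorem GoodRep.sat_closed {f : E → F} {U : Set E} {B : Set F} (h : GoodRep f U B)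
    {C : Set E} (hCU : C ⊆ U) (hC : IsOpen (U \ C)) :
    IsOpen (U \ {x ∈ U | f x ∈ f '' C}) := by
  have h1 := h.image_closed hCU hC
  have h2 := (h.cont.mono subset_closure).isOpen_inter_preimage h.openU h1
  convert h2 using 1
  ext x
  constructor
  · rintro ⟨hx, hxn⟩
    exact ⟨hx, h.maps x hx, fun hh => hxn ⟨hx, hh⟩⟩
  · rintro ⟨hx, -, hxn⟩
    exact ⟨hx, fun hh => hxn hh.2⟩

theorem GoodRep.local_count {k : ℕ} (hE : Module.finrank ℂ E = k + 1)
    (hF : Module.finrank ℂ F = k + 2) {f : E → F} {U : Set E} {B : Set F} (h : GoodRep f U B)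
    {x : E} (hx : x ∈ U) (himm : ∀ x' ∈ U, f x' = f x → Function.Injective (fderiv ℂ f x')) :
    ∃ V ∈ 𝓝 x, ∃ C : Set E, dimH C ≤ ((2 * k : ℕ) : ENNReal) ∧ ∀ z ∈ V, z ∉ C →
      ∀ᶠ z' in 𝓝 z, {a ∈ U | f a = f z'}.ncard = {a ∈ U | f a = f z}.ncard := by
  classical
  set Z := {a ∈ U | f a = f x} with hZ
  have hZfin : Z.Finite := h.fin (f x)
  have hyp : ∀ i : Z, ∃ g : F → ℂ, ∃ ψ : F → E, AnalyticAt ℂ g (f x) ∧ ContinuousAt ψ (f x) ∧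
      ψ (f x) = i ∧ (∀ᶠ y in 𝓝 (f x), g y = 0 → f (ψ y) = y) ∧ ∀ᶠ x' in 𝓝 (i : E), g (f x') = 0 := by
    intro i
    have := local_hypersurface (by omega) (h.an i i.2.1) (himm i i.2.1 i.2.2)
    rwa [i.2.2] at this
  choose g ψ hg hψc hψ0 hgψ hgf using hyp
  have hanti : ∀ i : Z, ∃ K : NNReal, ∃ V ∈ 𝓝 (i : E), ∀ a ∈ V, ∀ b ∈ V,
      dist a b ≤ K * dist (f a) (f b) := fun i =>
    anti_of_injective (h.an i i.2.1).hasStrictFDerivAt (himm i i.2.1 i.2.2)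
  choose K V₁ hV₁ hK using hanti
  obtain ⟨D, hD, hdisj⟩ := hZfin.t2_separation
  let N : Z → Set E := fun i => interior (V₁ i ∩ {x' | g i (f x') = 0} ∩ D i ∩ U)
  have hN : ∀ i : Z, N i ∈ 𝓝 (i : E) := fun i => by
    rw [interior_mem_nhds]
    exact inter_mem (inter_mem (inter_mem (hV₁ i) (hgf i)) ((hD i).2.mem_nhds (hD i).1))
      (h.openU.mem_nhds i.2.1)
  have hNs : ∀ i : Z, N i ⊆ V₁ i ∩ {x' | g i (f x') = 0} ∩ D i ∩ U := fun i => interior_subset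
  have : Finite Z := hZfin
  have hy1 : ∀ᶠ y in 𝓝 (f x), ∀ a ∈ U, f a = y → a ∈ ⋃ i, N i := by
    refine h.tube (h.maps x hx) (isOpen_iUnion fun i => isOpen_interior) ?_
    intro a ha hax
    exact mem_iUnion.2 ⟨⟨a, ha, hax⟩, mem_of_mem_nhds (hN ⟨a, ha, hax⟩)⟩
  have hy2 : ∀ᶠ y in 𝓝 (f x), ∀ i, (g i y = 0 → f (ψ i y) = y) ∧ ψ i y ∈ N i ∧
      AnalyticAt ℂ (g i) y := by
    rw [eventually_all]
    intro i
    have h3 : ∀ᶠ y in 𝓝 (f x), ψ i y ∈ N i := by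
      apply (hψc i).eventually_mem
      rw [hψ0]; exact hN i
    exact (hgψ i).and (h3.and (hg i).eventually_analyticAt)
  have hcount : ∀ᶠ y in 𝓝 (f x), {a ∈ U | f a = y}.ncard = {i : Z | g i y = 0}.ncard := by
    filter_upwards [hy1, hy2] with y h1 h2
    have himg : {a ∈ U | f a = y} = (fun i => ψ i y) '' {i : Z | g i y = 0} := by
      ext a
      constructor
      · rintro ⟨haU, hay⟩
        obtain ⟨i, hi⟩ := mem_iUnion.1 (h1 a haU hay)
        have h0 : g i y = 0 := by rw [← hay]; exact (hNs i hi).1.1.2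
        refine ⟨i, h0, ?_⟩
        have h4 := hK i (ψ i y) (hNs i (h2 i).2.1).1.1.1 a (hNs i hi).1.1.1
        rw [(h2 i).1 h0, hay, dist_self, mul_zero] at h4
        exact dist_le_zero.1 h4
      · rintro ⟨i, hi, rfl⟩
        exact ⟨(hNs i (h2 i).2.1).2, (h2 i).1 hi⟩
    rw [himg, ncard_image_of_injOn]
    intro i _ j _ hij
    by_contra hne
    have hd := hdisj i.2 j.2 (fun hh => hne (Subtype.ext hh))
    have e1 := (hNs i (h2 i).2.1).1.2
    have e2 := (hNs j (h2 j).2.1).1.2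
    simp only at hij
    rw [← hij] at e2
    exact (Set.disjoint_left.1 hd e1 e2).elim
  have hfc : ContinuousAt f x := (h.an x hx).continuousAt
  obtain ⟨ρ, hρ, hball⟩ := Metric.eventually_nhds_iff_ball.1
    ((hfc.eventually (hcount.and hy2)).and (h.openU.mem_nhds hx))
  set V := Metric.ball x ρ with hV
  let bad : Set Z := {i | ∃ z ∈ V, g i (f z) ≠ 0}
  have han : ∀ i, AnalyticOnNhd ℂ (fun z => g i (f z)) V := fun i z hz =>
    ((hball z hz).1.2 i).2.2.fun_comp (h.an z (hball z hz).2)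
  refine ⟨V, Metric.ball_mem_nhds x hρ, ⋃ i ∈ bad, {z ∈ V | g i (f z) = 0}, ?_, ?_⟩
  · rw [dimH_bUnion (Set.toFinite bad).countable]
    refine iSup₂_le fun i hi => ?_
    exact dimH_zero_analytic hE Metric.isOpen_ball (convex_ball x ρ).isPreconnected (han i) hi
  · intro z hz hzC
    have h5 : ∀ᶠ z' in 𝓝 z, ∀ i ∈ bad, g i (f z') ≠ 0 := by
      rw [eventually_all_finite (Set.toFinite bad)]
      intro i hi
      refine (han i z hz).continuousAt.eventually_ne ?_
      intro h0
      apply hzC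
      exact mem_iUnion₂.2 ⟨i, hi, hz, h0⟩
    filter_upwards [h5, Metric.isOpen_ball.mem_nhds hz] with z' h6 hz'
    rw [(hball z' hz').1.1, (hball z hz).1.1]
    congr 1
    ext i
    by_cases hi : i ∈ bad
    · have := h5.self_of_nhds i hi
      simp [this, h6 i hi]
    · have hi' : ∀ z ∈ V, g i (f z) = 0 := by
        intro w hw; by_contra hcon; exact hi ⟨w, hw, hcon⟩
      simp [hi' z hz, hi' z' hz']

theorem GoodRep.generic_count {k : ℕ} (hE : Module.finrank ℂ E = k + 1)
    (hF : Module.finrank ℂ F = k + 2) {f : E → F} {U : Set E} {B : Set F} (h : GoodRep f U B)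
    (hne : U.Nonempty) :
    ∃ d : ℕ, ∃ W : Set F, IsOpen W ∧ f '' U ⊆ closure (f '' U ∩ W) ∧ (f '' U ∩ W).Nonempty ∧
      ∀ y ∈ f '' U ∩ W, Set.ncard {x ∈ U | f x = y} = d := by
  have : ProperSpace E := FiniteDimensional.proper ℂ E
  have : CompleteSpace F := FiniteDimensional.complete ℂ F
  obtain ⟨x0, hx0, hinj⟩ := exists_immersive h.openU hne h.an h.fin
  obtain ⟨A', hA'⟩ := (fderiv ℂ f x0).toLinearMap.exists_leftInverse_of_injective
    (LinearMap.ker_eq_bot.2 hinj)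
  let A : F →L[ℂ] E := A'.toContinuousLinearMap
  let δ : E → ℂ := fun x => LinearMap.det (A.comp (fderiv ℂ f x)).toLinearMap
  have hδa : AnalyticOnNhd ℂ δ U := by
    intro x hx
    apply det_analytic
    exact (((ContinuousLinearMap.compL ℂ E F E) A).analyticAt _).fun_comp (h.an x hx).fderiv
  have hδ0 : δ x0 ≠ 0 := by
    have : (A.comp (fderiv ℂ f x0)).toLinearMap = LinearMap.id := hA'
    simp only [δ, this, LinearMap.det_id]
    exact one_ne_zero
  have hδinj : ∀ x, δ x ≠ 0 → Function.Injective (fderiv ℂ f x) := by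
    intro x hx a b hab
    have hu : LinearMap.ker (A.comp (fderiv ℂ f x)).toLinearMap = ⊥ := by
      by_contra hcon
      exact hx (LinearMap.det_eq_zero_iff_ker_ne_bot.2 hcon)
    apply LinearMap.ker_eq_bot.1 hu
    show A (fderiv ℂ f x a) = A (fderiv ℂ f x b)
    rw [hab]
  -- E1
  let S := {x ∈ U | δ x = 0}
  have hS : dimH S ≤ ((2 * k : ℕ) : ENNReal) :=
    dimH_zero_analytic hE h.openU h.conn hδa ⟨x0, hx0, hδ0⟩
  have hSU : S ⊆ U := fun x hx => hx.1
  have hSo : IsOpen (U \ S) := by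
    have h2 := hδa.continuousOn.isOpen_inter_preimage h.openU (isOpen_compl_singleton (x := (0:ℂ)))
    convert h2 using 1
    ext x
    simp only [S, mem_diff, mem_setOf_eq, mem_inter_iff, mem_preimage, mem_compl_iff,
      mem_singleton_iff]
    tauto
  have hSimm : ∀ x ∈ U, x ∉ S → Function.Injective (fderiv ℂ f x) := by
    intro x hx hxS
    apply hδinj
    intro h0; exact hxS ⟨hx, h0⟩
  let E1 := {x ∈ U | f x ∈ f '' S}
  have hE1 : dimH E1 ≤ ((2 * k : ℕ) : ENNReal) := dimH_saturate h.an hSU hS hSimm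
  have hE1o : IsOpen (U \ E1) := h.sat_closed hSU hSo
  let cnt : E → ℕ := fun z => {a ∈ U | f a = f z}.ncard
  let E2 := {x ∈ U | x ∉ E1 ∧ ¬ ∀ᶠ z in 𝓝 x, cnt z = cnt x}
  have hE2 : dimH E2 ≤ ((2 * k : ℕ) : ENNReal) := by
    apply dimH_le_of_local
    rintro x ⟨hx, hx1, -⟩
    have himm : ∀ x' ∈ U, f x' = f x → Function.Injective (fderiv ℂ f x') := by
      intro x' hx' hxx
      apply hSimm x' hx'
      intro hS'
      exact hx1 ⟨hx, x', hS', hxx⟩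
    obtain ⟨V, hV, C, hC, hVC⟩ := h.local_count hE hF hx himm
    refine ⟨V ∩ E2, inter_mem (mem_nhdsWithin_of_mem_nhds hV) self_mem_nhdsWithin, ?_⟩
    refine (dimH_mono ?_).trans hC
    rintro z ⟨hzV, -, -, hz⟩
    by_contra hzC
    exact hz (hVC z hzV hzC)
  let E3 := E1 ∪ E2
  have hE3U : E3 ⊆ U := union_subset (fun x hx => hx.1) (fun x hx => hx.1)
  have hE3 : dimH E3 ≤ ((2 * k : ℕ) : ENNReal) := by
    rw [dimH_union]; exact max_le hE1 hE2
  have hgood : ∀ x ∈ U, x ∉ E3 → ∀ᶠ z in 𝓝 x, cnt z = cnt x := by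
    intro x hx hx3
    by_contra hcon
    exact hx3 (Or.inr ⟨hx, fun h1 => hx3 (Or.inl h1), hcon⟩)
  have hE3o : IsOpen (U \ E3) := by
    rw [isOpen_iff_mem_nhds]
    rintro x ⟨hx, hx3⟩
    have hx1 : x ∈ U \ E1 := ⟨hx, fun h1 => hx3 (Or.inl h1)⟩
    filter_upwards [(hgood x hx hx3).eventually_nhds, hE1o.mem_nhds hx1] with z hz hz1
    refine ⟨hz1.1, ?_⟩
    rintro (h1 | h2)
    · exact hz1.2 h1
    · apply h2.2.2
      have := hz.self_of_nhds
      filter_upwards [hz] with w hw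
      rw [hw, this]
  have hSE3 : S ⊆ E3 := fun x hx => Or.inl ⟨hx.1, x, hx, rfl⟩
  have hE3imm : ∀ x ∈ U, x ∉ E3 → Function.Injective (fderiv ℂ f x) :=
    fun x hx hx3 => hSimm x hx (fun hS => hx3 (hSE3 hS))
  let E4 := {x ∈ U | f x ∈ f '' E3}
  have hE4 : dimH E4 ≤ ((2 * k : ℕ) : ENNReal) := dimH_saturate h.an hE3U hE3 hE3imm
  have hE4o : IsOpen (U \ E4) := h.sat_closed hE3U hE3o
  have hE34 : E3 ⊆ E4 := fun x hx => ⟨hE3U hx, x, hx, rfl⟩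
  have hcc : ContinuousOn cnt (U \ E4) := by
    intro x hx
    have := hgood x hx.1 (fun h3 => hx.2 (hE34 h3))
    apply ContinuousAt.continuousWithinAt
    rw [ContinuousAt, nhds_discrete ℕ, tendsto_pure]
    exact this
  have hdense := dense_compl_small hE hE4
  -- local values
  have hloc : ∀ x ∈ U, ∃ j : ℕ, ∀ᶠ z in 𝓝 x, z ∈ U \ E4 → cnt z = j := by
    intro x hx
    obtain ⟨ρ, hρ, hB⟩ := Metric.isOpen_iff.1 h.openU x hx
    have ho : IsOpen (Metric.ball x ρ \ E4) := by
      have : Metric.ball x ρ \ E4 = Metric.ball x ρ ∩ (U \ E4) := by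
        ext z; constructor
        · rintro ⟨h1, h2⟩; exact ⟨h1, hB h1, h2⟩
        · rintro ⟨h1, -, h2⟩; exact ⟨h1, h2⟩
      rw [this]; exact Metric.isOpen_ball.inter hE4o
    have hpc := preconn_compl_small hE hE4 (convex_ball x ρ) ho
    obtain ⟨w, hw, hw4⟩ := hdense.exists_mem_open Metric.isOpen_ball ⟨x, Metric.mem_ball_self hρ⟩
    refine ⟨cnt w, ?_⟩
    filter_upwards [Metric.ball_mem_nhds x hρ] with z hz hz4
    exact hpc.constant (hcc.mono (fun a ha => ⟨hB ha.1, ha.2⟩)) ⟨hz, hz4.2⟩ ⟨hw4, hw⟩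
  choose! j hj using hloc
  have hjc : ContinuousOn j U := by
    intro x hx
    apply ContinuousAt.continuousWithinAt
    rw [ContinuousAt, nhds_discrete ℕ, tendsto_pure]
    filter_upwards [(hj x hx).eventually_nhds, h.openU.mem_nhds hx] with z hz hzU
    have h1 := hz.and ((hj z hzU).and (h.openU.mem_nhds hzU))
    obtain ⟨O, hO, hOo, hzO⟩ := eventually_nhds_iff.1 h1
    obtain ⟨w, hw, hwO⟩ := hdense.exists_mem_open hOo ⟨z, hzO⟩
    obtain ⟨a, b, c⟩ := hO w hwO
    rw [← a ⟨c, hw⟩, ← b ⟨c, hw⟩]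
  have hconst : ∀ x ∈ U \ E4, cnt x = j x0 := by
    intro x hx
    rw [(hj x hx.1).self_of_nhds hx]
    exact h.conn.constant hjc hx.1 hx0
  have hWiff : ∀ x ∈ U, x ∉ E4 → f x ∈ f '' U ∩ (B \ f '' E3) := by
    intro x hx hx4
    exact ⟨⟨x, hx, rfl⟩, h.maps x hx, fun hh => hx4 ⟨hx, hh⟩⟩
  refine ⟨j x0, B \ f '' E3, h.image_closed hE3U hE3o, ?_, ?_, ?_⟩
  · rintro _ ⟨x, hx, rfl⟩
    rw [mem_closure_iff_nhds]
    intro t ht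
    have h1 := ((h.an x hx).continuousAt.eventually_mem ht).and (h.openU.mem_nhds hx)
    obtain ⟨O, hO, hOo, hxO⟩ := eventually_nhds_iff.1 h1
    obtain ⟨w, hw, hwO⟩ := hdense.exists_mem_open hOo ⟨x, hxO⟩
    exact ⟨f w, (hO w hwO).1, hWiff w (hO w hwO).2 hw⟩
  · obtain ⟨w, hw, hwU⟩ := hdense.exists_mem_open h.openU hne
    exact ⟨f w, hWiff w hwU hw⟩
  · rintro _ ⟨⟨x, hx, rfl⟩, -, hx3⟩
    exact hconst x ⟨hx, fun hh => hx3 hh.2⟩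
end

section
theorem dslope_bound {φ : ℂ → ℂ} {r K : ℝ} (hr : 0 < r) (hK : 0 < K)
    (hd : DifferentiableOn ℂ φ (Metric.ball 0 r)) (hb : ∀ t ∈ Metric.ball (0:ℂ) r, ‖φ t‖ ≤ K) :
    DifferentiableOn ℂ (dslope φ 0) (Metric.ball 0 r) ∧
      ∀ t ∈ Metric.ball (0:ℂ) r, ‖dslope φ 0 t‖ ≤ 3 * K / r := by
  refine ⟨(Complex.differentiableOn_dslope (Metric.ball_mem_nhds 0 hr)).2 hd, fun t ht => ?_⟩
  refine Complex.norm_dslope_le_div_of_mapsTo_ball hd (fun s hs => ?_) ht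
  rw [Metric.mem_closedBall, dist_eq_norm]
  have h1 := hb s hs
  have h2 := hb 0 (Metric.mem_ball_self hr)
  have := norm_sub_le (φ s) (φ 0)
  linarith

/-- The open polydisc. -/
def PD (n : ℕ) (r : ℝ) : Set (Fin n → ℂ) := {x | ∀ i, ‖x i‖ < r}

theorem PD_update {n : ℕ} {r : ℝ} {x : Fin n → ℂ} (hx : x ∈ PD n r) (i : Fin n) {t : ℂ}
    (ht : t ∈ Metric.ball (0:ℂ) r) : Function.update x i t ∈ PD n r := by
  intro j
  by_cases h : j = i
  · subst h; simpa using ht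
  · simpa [h] using hx j

/-- Bounded separately holomorphic functions on the polydisc. -/
def SH (n : ℕ) (r K : ℝ) (g : (Fin n → ℂ) → ℂ) : Prop :=
  (∀ x ∈ PD n r, ‖g x‖ ≤ K) ∧
    ∀ x ∈ PD n r, ∀ i, DifferentiableOn ℂ (fun t => g (Function.update x i t)) (Metric.ball 0 r)

variable {n : ℕ} {r K K' : ℝ} {g g' : (Fin n → ℂ) → ℂ}

theorem SH.mono (h : SH n r K g) (hK : K ≤ K') : SH n r K' g :=
  ⟨fun x hx => (h.1 x hx).trans hK, h.2⟩

theorem SH.add (h : SH n r K g) (h' : SH n r K' g') : SH n r (K + K') (fun x => g x + g' x) :=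
  ⟨fun x hx => (norm_add_le _ _).trans (add_le_add (h.1 x hx) (h'.1 x hx)),
    fun x hx i => (h.2 x hx i).add (h'.2 x hx i)⟩

theorem SH.mul (h : SH n r K g) (h' : SH n r K' g') : SH n r (K * K') (fun x => g x * g' x) :=
  ⟨fun x hx => by
    rw [norm_mul]
    exact mul_le_mul (h.1 x hx) (h'.1 x hx) (norm_nonneg _) ((norm_nonneg _).trans (h.1 x hx)),
    fun x hx i => (h.2 x hx i).mul (h'.2 x hx i)⟩

theorem SH.const (c : ℂ) : SH n r ‖c‖ (fun _ => c) :=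
  ⟨fun _ _ => le_rfl, fun _ _ _ => differentiableOn_const c⟩

theorem SH.coord (i : Fin n) : SH n r r (fun x => x i) := by
  refine ⟨fun x hx => (hx i).le, fun x hx j => ?_⟩
  by_cases h : i = j
  · subst h; simp only [Function.update_self]; exact differentiableOn_id
  · simp [h]

theorem SH.div (hr : 0 < r) (hK : 0 < K) (hg : SH n r K g) (k : Fin n) :
    SH n r (3 * K / r) (fun x => dslope (fun t => g (Function.update x k t)) 0 (x k)) := by
  have key : ∀ x ∈ PD n r, DifferentiableOn ℂ (dslope (fun t => g (Function.update x k t)) 0)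
      (Metric.ball 0 r) ∧ ∀ t ∈ Metric.ball (0:ℂ) r,
      ‖dslope (fun t => g (Function.update x k t)) 0 t‖ ≤ 3 * K / r := fun x hx =>
    dslope_bound hr hK (hg.2 x hx k) fun t ht => hg.1 _ (PD_update hx k ht)
  refine ⟨fun x hx => (key x hx).2 _ (by simpa using hx k), fun x hx j => ?_⟩
  by_cases hjk : j = k
  · subst hjk
    simpa using (key x hx).1
  have hsimp : (fun t => dslope (fun s => g (Function.update (Function.update x j t) k s)) 0
      (Function.update x j t k)) =
      fun t => dslope (fun s => g (Function.update (Function.update x j t) k s)) 0 (x k) := by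
    funext t
    rw [Function.update_of_ne (Ne.symm hjk)]
  simp only [hsimp]
  have hne : ∀ w ∈ Metric.ball (0:ℂ) r, w ≠ 0 → DifferentiableOn ℂ
      (fun t => dslope (fun s => g (Function.update (Function.update x j t) k s)) 0 w)
      (Metric.ball 0 r) := by
    intro w hw hw0
    have : (fun t => dslope (fun s => g (Function.update (Function.update x j t) k s)) 0 w) =
        fun t => w⁻¹ * (g (Function.update (Function.update x k w) j t) -
          g (Function.update (Function.update x k 0) j t)) := by
      funext t
      rw [dslope_of_ne _ hw0, slope_def_field, Function.update_comm hjk, Function.update_comm hjk]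
      field_simp
      simp
    rw [this]
    exact ((hg.2 _ (PD_update hx k hw) j).sub
      (hg.2 _ (PD_update hx k (Metric.mem_ball_self hr)) j)).const_mul _
  by_cases hxk : x k = 0
  · rw [hxk]
    have hball : Metric.ball (0:ℂ) r ∈ 𝓝[≠] (0:ℂ) :=
      mem_nhdsWithin_of_mem_nhds (Metric.ball_mem_nhds 0 hr)
    have hlim : TendstoUniformlyOn
        (fun (w : ℂ) t => dslope (fun s => g (Function.update (Function.update x j t) k s)) 0 w)
        (fun t => dslope (fun s => g (Function.update (Function.update x j t) k s)) 0 0)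
        (𝓝[≠] 0) (Metric.ball 0 r) := by
      rw [Metric.tendstoUniformlyOn_iff]
      intro ε hε
      set M := 3 * (3 * K / r) / r with hM
      have hMpos : 0 < M := by positivity
      have hsm : Metric.ball (0:ℂ) (ε / M) ∈ 𝓝[≠] (0:ℂ) :=
        mem_nhdsWithin_of_mem_nhds (Metric.ball_mem_nhds 0 (by positivity))
      filter_upwards [hball, hsm] with w hw hwε t ht
      obtain ⟨h1, h2⟩ := key _ (PD_update hx j ht)
      obtain ⟨h3, h4⟩ := dslope_bound hr (by positivity) h1 h2
      have h5 := h4 w hw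
      have h6 := sub_smul_dslope
        (dslope (fun s => g (Function.update (Function.update x j t) k s)) 0) 0 w
      rw [dist_comm, dist_eq_norm, ← h6, norm_smul, sub_zero]
      rw [Metric.mem_ball, dist_zero_right, lt_div_iff₀ hMpos] at hwε
      calc _ ≤ ‖w‖ * M := by gcongr
        _ < ε := hwε
    refine hlim.tendstoLocallyUniformlyOn.differentiableOn ?_ Metric.isOpen_ball
    filter_upwards [hball, self_mem_nhdsWithin] with w hw hw0 using hne w hw hw0
  · exact hne _ (by simpa using hx k) hxk

theorem SH.div_eq (g : (Fin n → ℂ) → ℂ) (k : Fin n) (x : Fin n → ℂ) :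
    g x = g (Function.update x k 0) +
      x k * dslope (fun t => g (Function.update x k t)) 0 (x k) := by
  have := sub_smul_dslope (fun t => g (Function.update x k t)) 0 (x k)
  simp only [sub_zero, smul_eq_mul, Function.update_eq_self] at this
  rw [this]; ring

theorem SH.restrict (hr : 0 < r) (hg : SH n r K g) (k : Fin n) :
    SH n r K (fun x => g (Function.update x k 0)) := by
  have h0 := Metric.mem_ball_self (x := (0:ℂ)) hr
  refine ⟨fun x hx => hg.1 _ (PD_update hx k h0), fun x hx j => ?_⟩
  by_cases hjk : j = k
  · subst hjk; simp
  · have : (fun t => g (Function.update (Function.update x j t) k 0)) =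
        fun t => g (Function.update (Function.update x k 0) j t) := by
      funext t; rw [Function.update_comm hjk]
    simp only [this]
    exact hg.2 _ (PD_update hx k h0) j

/-- Some bound exists. -/
def SHb (n : ℕ) (r : ℝ) (g : (Fin n → ℂ) → ℂ) : Prop := ∃ K > 0, SH n r K g

theorem SH.toSHb (h : SH n r K g) : SHb n r g :=
  ⟨max K 1, by positivity, h.mono (le_max_left _ _)⟩

theorem SHb.mul (h : SHb n r g) (h' : SHb n r g') : SHb n r (fun x => g x * g' x) := by
  obtain ⟨K, hK, h⟩ := h
  obtain ⟨K', hK', h'⟩ := h'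
  exact ⟨K * K', by positivity, h.mul h'⟩

theorem SHb.add (h : SHb n r g) (h' : SHb n r g') : SHb n r (fun x => g x + g' x) := by
  obtain ⟨K, hK, h⟩ := h
  obtain ⟨K', hK', h'⟩ := h'
  exact ⟨K + K', by positivity, h.add h'⟩

theorem SHb.const (c : ℂ) : SHb n r (fun _ => c) := (SH.const c).toSHb

theorem SHb.coord (i : Fin n) : SHb n r (fun x => x i) := (SH.coord i).toSHb

theorem SHb.prod {ι : Type*} (s : Finset ι) {G : ι → (Fin n → ℂ) → ℂ}
    (h : ∀ i ∈ s, SHb n r (G i)) : SHb n r (fun x => ∏ i ∈ s, G i x) := by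
  classical
  induction s using Finset.induction_on with
  | empty => simpa using SHb.const 1
  | insert a s ha ih =>
    simp only [Finset.prod_insert ha]
    exact (h a (by simp)).mul (ih fun i hi => h i (by simp [hi]))

theorem SHb.pow (h : SHb n r g) (m : ℕ) : SHb n r (fun x => g x ^ m) := by
  have := SHb.prod (Finset.range m) (G := fun _ => g) (fun _ _ => h)
  simpa using this

def monoF (α : Fin n → ℕ) (x : Fin n → ℂ) : ℂ := ∏ i, x i ^ α i

theorem monoF_SHb (α : Fin n → ℕ) : SHb n r (monoF α) :=
  SHb.prod _ fun i _ => (SHb.coord i).pow _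

theorem monoF_update (α : Fin n → ℕ) (k : Fin n) (s : ℕ) (x : Fin n → ℂ) :
    monoF (Function.update α k s) x = x k ^ s * monoF (Function.update α k 0) x := by
  unfold monoF
  rw [← Finset.mul_prod_erase Finset.univ (fun i => x i ^ (Function.update α k s) i)
      (Finset.mem_univ k),
    ← Finset.mul_prod_erase Finset.univ (fun i => x i ^ (Function.update α k 0) i)
      (Finset.mem_univ k)]
  simp only [Function.update_self, pow_zero, one_mul]
  congr 1
  apply Finset.prod_congr rfl
  intro i hi
  rw [Function.update_of_ne (Finset.ne_of_mem_erase hi), Function.update_of_ne (Finset.ne_of_mem_erase hi)]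

/-- `u` is decomposed modulo the span of `b` with cofactors bounded by `K`. -/
def Dcm {m p : ℕ} (n : ℕ) (r : ℝ) (b : Fin m → (Fin n → ℂ) → ℂ) (f : Fin p → (Fin n → ℂ) → ℂ)
    (K : ℝ) (u : (Fin n → ℂ) → ℂ) : Prop :=
  ∃ c : Fin m → ℂ, ∃ a : Fin p → (Fin n → ℂ) → ℂ, (∀ i, SH n r K (a i)) ∧
    ∀ x ∈ PD n r, u x = ∑ j, c j * b j x + ∑ i, a i x * f i x

section
variable {m p : ℕ} {b : Fin m → (Fin n → ℂ) → ℂ} {f : Fin p → (Fin n → ℂ) → ℂ}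

theorem Dcm.add {u u'} (h : Dcm n r b f K u) (h' : Dcm n r b f K' u') :
    Dcm n r b f (K + K') (fun x => u x + u' x) := by
  obtain ⟨c, a, ha, h⟩ := h
  obtain ⟨c', a', ha', h'⟩ := h'
  refine ⟨fun j => c j + c' j, fun i x => a i x + a' i x, fun i => (ha i).add (ha' i), ?_⟩
  intro x hx
  dsimp only
  rw [h x hx, h' x hx]
  simp only [add_mul, Finset.sum_add_distrib]
  ring

theorem Dcm.congr {u u'} (h : Dcm n r b f K u) (he : ∀ x ∈ PD n r, u' x = u x) :
    Dcm n r b f K u' := by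
  obtain ⟨c, a, ha, h⟩ := h
  exact ⟨c, a, ha, fun x hx => by rw [he x hx, h x hx]⟩

theorem division (hr : 0 < r) (N : ℕ)
    (hα : ∀ α : Fin n → ℕ, (∀ i, α i ≤ N) → ∃ K > 0, Dcm n r b f K (monoF α))
    (hpow : ∀ k : Fin n, ∃ e : Fin p → (Fin n → ℂ) → ℂ, (∀ i, SHb n r (e i)) ∧
      ∀ x ∈ PD n r, x k ^ N = ∑ i, e i x * f i x) :
    ∃ C > 0, ∀ K > 0, ∀ g, SH n r K g → Dcm n r b f (C * K) g := by
  have h0 : (0 : Fin n → ℂ) ∈ PD n r := fun i => by simpa using hr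
  have main : ∀ D : Finset (Fin n), ∀ α : Fin n → ℕ, (∀ i, α i ≤ N) → (∀ i ∈ D, α i = 0) →
      ∃ C > 0, ∀ K > 0, ∀ g, SH n r K g → DependsOn g (D : Set (Fin n)) →
        Dcm n r b f (C * K) (fun x => monoF α x * g x) := by
    intro D
    induction D using Finset.induction_on with
    | empty =>
      intro α hN _
      obtain ⟨C, hC, c, a, ha, h⟩ := hα α hN
      refine ⟨C, hC, fun K hK g hg hdep => ?_⟩
      have hgc : ∀ x, g x = g 0 := fun x => hdep (by simp)
      refine ⟨fun j => g 0 * c j, fun i x => a i x * g 0, fun i => ?_, fun x hx => ?_⟩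
      · exact (ha i).mul ((SH.const (g 0)).mono (hg.1 0 h0))
      · dsimp only
        rw [hgc x, h x hx, add_mul, Finset.sum_mul, Finset.sum_mul]
        congr 1
        · exact Finset.sum_congr rfl fun j _ => by ring
        · exact Finset.sum_congr rfl fun j _ => by ring
    | insert k D hk ih =>
      intro α hN hz
      have hαk : Function.update α k 0 = α := by
        rw [← hz k (by simp)]; simp
      have T : ∀ s, ∀ t, s + t = N → ∃ C > 0, ∀ K > 0, ∀ g, SH n r K g →
          DependsOn g ((insert k D : Finset (Fin n)) : Set (Fin n)) →
          Dcm n r b f (C * K) (fun x => monoF (Function.update α k t) x * g x) := by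
        intro s
        induction s with
        | zero =>
          intro t ht
          obtain rfl : t = N := by omega
          obtain ⟨e, he, hex⟩ := hpow k
          have he' : ∀ i, SHb n r (fun x => e i x * monoF α x) := fun i => (he i).mul (monoF_SHb α)
          choose Ke hKe hKe' using he'
          refine ⟨∑ i, Ke i + 1, by have := Finset.sum_nonneg (fun i (_ : i ∈ Finset.univ) => (hKe i).le); linarith, fun K hK g hg _ => ?_⟩
          refine ⟨0, fun i x => e i x * monoF α x * g x, fun i => ?_, fun x hx => ?_⟩
          · have : Ke i ≤ ∑ i, Ke i + 1 := by
              have := Finset.single_le_sum (fun i (_ : i ∈ Finset.univ) => (hKe i).le) (Finset.mem_univ i)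
              linarith
            exact ((hKe' i).mul hg).mono (by gcongr)
          · dsimp only
            rw [monoF_update, hαk, hex x hx]
            simp only [Pi.zero_apply, zero_mul, Finset.sum_const_zero, zero_add, Finset.sum_mul]
            exact Finset.sum_congr rfl fun j _ => by ring
        | succ s ihs =>
          intro t ht
          obtain ⟨C1, hC1, H1⟩ := ihs (t+1) (by omega)
          obtain ⟨C2, hC2, H2⟩ := ih (Function.update α k t)
            (by
              intro i
              by_cases h : i = k
              · subst h; simp; omega
              · simpa [h] using hN i)
            (by
              intro i hi
              have h : i ≠ k := fun h => hk (h ▸ hi)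
              simpa [h] using hz i (by simp [hi]))
          refine ⟨C2 + C1 * (3 / r), by positivity, fun K hK g hg hdep => ?_⟩
          have d1 := H2 K hK _ (hg.restrict hr k) (by
            intro x y hxy
            apply hdep
            intro i hi
            by_cases h : i = k
            · subst h; simp
            · have hiD : i ∈ D := by simpa [h] using hi
              simpa [h] using hxy i hiD)
          have d2 := H1 (3 * K / r) (by positivity) _ (hg.div hr hK k) (by
            intro x y hxy
            have e1 : (fun t => g (Function.update x k t)) = fun t => g (Function.update y k t) := by
              funext t
              apply hdep
              intro i hi
              by_cases h : i = k
              · subst h; simp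
              · simpa [h] using hxy i hi
            simp only [e1, hxy k (by simp)])
          have := d1.add d2
          have e2 : (C2 + C1 * (3 / r)) * K = C2 * K + C1 * (3 * K / r) := by ring
          rw [e2]
          refine this.congr fun x hx => ?_
          rw [monoF_update α k (t+1), monoF_update α k t]
          conv_lhs => rw [SH.div_eq g k x]
          ring
      have := T N 0 (by omega)
      rwa [hαk] at this
  obtain ⟨C, hC, H⟩ := main Finset.univ (fun _ => 0) (by simp) (by simp)
  refine ⟨C, hC, fun K hK g hg => ?_⟩
  refine (H K hK g hg ?_).congr fun x hx => ?_
  · intro x y hxy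
    congr 1
    funext i
    exact hxy i (by simp)
  · simp [monoF]

theorem fibre_card {C : ℝ} (hC : 0 < C)
    (hdiv : ∀ K > 0, ∀ g, SH n r K g → Dcm n r b f (C * K) g)
    (y : Fin p → ℂ) (hy : (∑ i, ‖y i‖) * C ≤ 1 / 2) (Z : Finset (Fin n → ℂ))
    (hZ : ∀ z ∈ Z, z ∈ PD n r ∧ ∀ i, f i z = y i) : Z.card ≤ m := by
  classical
  let Sp : Submodule ℂ (Z → ℂ) := Submodule.span ℂ (range fun j : Fin m => fun z : Z => b j z)
  have hit : ∀ N : ℕ, ∀ K > 0, ∀ g, SH n r K g → ∃ s ∈ Sp, ∀ z : Z, ‖g z - s z‖ ≤ (1/2)^N * K := by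
    intro N
    induction N with
    | zero =>
      intro K hK g hg
      refine ⟨0, Sp.zero_mem, fun z => ?_⟩
      simpa using hg.1 z (hZ z z.2).1
    | succ N ih =>
      intro K hK g hg
      obtain ⟨c, a, ha, h⟩ := hdiv K hK g hg
      have hg' : SH n r (K / 2) (fun x => ∑ i, a i x * y i) := by
        refine ⟨fun x hx => ?_, fun x hx i => ?_⟩
        · calc _ ≤ ∑ i, ‖a i x * y i‖ := norm_sum_le _ _
            _ ≤ ∑ i, (C * K) * ‖y i‖ := by
              refine Finset.sum_le_sum fun i _ => ?_
              rw [norm_mul]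
              exact mul_le_mul_of_nonneg_right ((ha i).1 x hx) (norm_nonneg _)
            _ = ((∑ i, ‖y i‖) * C) * K := by rw [← Finset.mul_sum]; ring
            _ ≤ 1/2 * K := by gcongr
            _ = K / 2 := by ring
        · exact DifferentiableOn.fun_sum fun j _ => ((ha j).2 x hx i).mul_const _
      obtain ⟨s, hs, hsz⟩ := ih (K/2) (by positivity) _ hg'
      refine ⟨(fun z : Z => ∑ j, c j * b j z) + s, Sp.add_mem ?_ hs, fun z => ?_⟩
      · have : (fun z : Z => ∑ j, c j * b j z) = ∑ j, c j • (fun z : Z => b j z) := by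
          funext z; simp
        rw [this]
        exact Sp.sum_mem fun j _ => Sp.smul_mem _ (Submodule.subset_span ⟨j, rfl⟩)
      · have h1 := hsz z
        have h2 := h z (hZ z z.2).1
        simp only [(hZ z z.2).2] at h2
        rw [h2, Pi.add_apply]
        calc _ = ‖∑ i, a i z * y i - s z‖ := by congr 1; ring
          _ ≤ _ := h1
          _ = _ := by ring
  have hmem : ∀ g, SHb n r g → (fun z : Z => g z) ∈ Sp := by
    rintro g ⟨K, hK, hg⟩
    have hcl : IsClosed (Sp : Set (Z → ℂ)) := Sp.closed_of_finiteDimensional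
    rw [← SetLike.mem_coe, ← hcl.closure_eq, Metric.mem_closure_iff]
    intro ε hε
    obtain ⟨N, hN⟩ := exists_pow_lt_of_lt_one (show 0 < ε / K by positivity) (show (1/2:ℝ) < 1 by norm_num)
    obtain ⟨s, hs, hsz⟩ := hit N K hK g hg
    refine ⟨s, hs, ?_⟩
    rw [lt_div_iff₀ hK] at hN
    rw [dist_pi_lt_iff hε]
    intro z
    rw [dist_eq_norm]
    exact (hsz z).trans_lt hN
  have htop : Sp = ⊤ := by
    rw [eq_top_iff]
    rintro u -
    have hu : u = ∑ z, u z • Pi.single z (1:ℂ) := by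
      funext w
      simp [Finset.sum_apply, Pi.single_apply]
    rw [hu]
    refine Sp.sum_mem fun z0 _ => Sp.smul_mem _ ?_
    have hsep : ∀ z : Z, ∃ L : (Fin n → ℂ) → ℂ, SHb n r L ∧ L z0 = 1 ∧ (z ≠ z0 → L z = 0) := by
      intro z
      by_cases h : z = z0
      · exact ⟨fun _ => 1, SHb.const 1, rfl, fun h' => absurd h h'⟩
      · obtain ⟨i, hi⟩ := Function.ne_iff.1 (fun hh => h (Subtype.ext hh))
        refine ⟨fun x => (x i + -(z.1 i)) * (z0.1 i - z.1 i)⁻¹,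
          ((SHb.coord i).add (SHb.const _)).mul (SHb.const _), ?_, fun _ => ?_⟩
        · have : z0.1 i - z.1 i ≠ 0 := sub_ne_zero.2 (Ne.symm hi)
          dsimp only; rw [← sub_eq_add_neg]
          exact mul_inv_cancel₀ this
        · simp
    choose L hL1 hL2 hL3 using hsep
    have hm := hmem (fun x => ∏ z, L z x) (SHb.prod _ fun z _ => hL1 z)
    have he : (fun z : Z => ∏ w, L w z) = Pi.single z0 (1:ℂ) := by
      funext z
      by_cases h : z = z0
      · subst h
        simp [hL2]
      · rw [Pi.single_eq_of_ne h]
        exact Finset.prod_eq_zero (Finset.mem_univ z) (hL3 z h)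
    rw [he] at hm
    exact hm
  have h1 : Module.finrank ℂ (Z → ℂ) ≤ m := by
    rw [← finrank_top, ← htop]
    exact (finrank_range_le_card _).trans (by simp)
  simpa using h1
end

end

/-- The class of an analytic function. -/
def mkO {n : ℕ} (g : Cn n → ℂ) (hg : AnalyticAt ℂ g 0) : Ogerm n := ⟨(g : Filter.Germ (𝓝 (0 : Cn n)) ℂ), g, hg, rfl⟩

section
variable {n p : ℕ}

theorem mkO_eq {g h : Cn n → ℂ} (hg : AnalyticAt ℂ g 0) (hh : AnalyticAt ℂ h 0) :
    mkO g hg = mkO h hh ↔ g =ᶠ[𝓝 0] h := by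
  rw [Subtype.ext_iff]
  exact Filter.Germ.coe_eq

theorem mkO_surj (G : Ogerm n) : ∃ g, ∃ hg : AnalyticAt ℂ g 0, G = mkO g hg := by
  obtain ⟨_, g, hg, rfl⟩ := G
  exact ⟨g, hg, rfl⟩

theorem mkO_add {g h : Cn n → ℂ} (hg : AnalyticAt ℂ g 0) (hh : AnalyticAt ℂ h 0) :
    mkO g hg + mkO h hh = mkO (fun x => g x + h x) (hg.add hh) := rfl

theorem mkO_mul {g h : Cn n → ℂ} (hg : AnalyticAt ℂ g 0) (hh : AnalyticAt ℂ h 0) :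
    mkO g hg * mkO h hh = mkO (fun x => g x * h x) (hg.mul hh) := rfl

theorem mkO_one : (1 : Ogerm n) = mkO (fun _ => 1) analyticAt_const := rfl

theorem mkO_zero : (0 : Ogerm n) = mkO (fun _ => 0) analyticAt_const := rfl

theorem mkO_smul (c : ℂ) {g : Cn n → ℂ} (hg : AnalyticAt ℂ g 0) :
    c • mkO g hg = mkO (fun x => c * g x) (analyticAt_const.mul hg) := rfl

theorem mkO_sum {ι : Type*} (s : Finset ι) {g : ι → Cn n → ℂ} (hg : ∀ i, AnalyticAt ℂ (g i) 0) :
    ∑ i ∈ s, mkO (g i) (hg i) =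
      mkO (fun x => ∑ i ∈ s, g i x) (s.analyticAt_fun_sum fun i _ => hg i) := by
  classical
  induction s using Finset.induction_on with
  | empty => rfl
  | insert a s ha ih =>
    rw [Finset.sum_insert ha, ih, mkO_add, mkO_eq]
    exact Eventually.of_forall fun x => by simp [Finset.sum_insert ha]

theorem mkO_prod {ι : Type*} (s : Finset ι) {g : ι → Cn n → ℂ} (hg : ∀ i, AnalyticAt ℂ (g i) 0) :
    ∏ i ∈ s, mkO (g i) (hg i) =
      mkO (fun x => ∏ i ∈ s, g i x) (s.analyticAt_fun_prod fun i _ => hg i) := by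
  classical
  induction s using Finset.induction_on with
  | empty => rfl
  | insert a s ha ih =>
    rw [Finset.prod_insert ha, ih, mkO_mul, mkO_eq]
    exact Eventually.of_forall fun x => by simp [Finset.prod_insert ha]

theorem mkO_pow {g : Cn n → ℂ} (hg : AnalyticAt ℂ g 0) (k : ℕ) :
    mkO g hg ^ k = mkO (fun x => g x ^ k) (hg.pow k) := rfl

theorem mkO_isUnit {g : Cn n → ℂ} (hg : AnalyticAt ℂ g 0) (h0 : g 0 ≠ 0) : IsUnit (mkO g hg) := by
  refine IsUnit.of_mul_eq_one (mkO (fun x => (g x)⁻¹) (hg.inv h0)) ?_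
  rw [mkO_mul, mkO_one, mkO_eq]
  filter_upwards [hg.continuousAt.eventually_ne h0] with x hx
  exact mul_inv_cancel₀ hx

theorem coord_analytic {f : Cn n → Cn p} (hf : AnalyticAt ℂ f 0) (i : Fin p) :
    AnalyticAt ℂ (fun x => f x i) 0 :=
  ((EuclideanSpace.proj i : Cn p →L[ℂ] ℂ).analyticAt _).comp hf

theorem coordIdeal_eq {f : Cn n → Cn p} (hf : AnalyticAt ℂ f 0) :
    coordIdeal f = Ideal.span (range fun i => mkO (fun x => f x i) (coord_analytic hf i)) := by
  unfold coordIdeal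
  congr 1
  ext G
  constructor
  · rintro ⟨i, hi⟩
    exact ⟨i, Subtype.ext hi.symm⟩
  · rintro ⟨i, rfl⟩
    exact ⟨i, rfl⟩

theorem mem_coordIdeal {f : Cn n → Cn p} (hf : AnalyticAt ℂ f 0) {g : Cn n → ℂ}
    (hg : AnalyticAt ℂ g 0) (h : mkO g hg ∈ coordIdeal f) :
    ∃ a : Fin p → Cn n → ℂ, (∀ i, AnalyticAt ℂ (a i) 0) ∧
      ∀ᶠ x in 𝓝 0, g x = ∑ i, a i x * f x i := by
  rw [coordIdeal_eq hf, Ideal.mem_span_range_iff_exists_fun] at h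
  obtain ⟨c, hc⟩ := h
  choose a ha hca using fun i => mkO_surj (c i)
  refine ⟨a, ha, ?_⟩
  simp only [hca, mkO_mul] at hc
  rw [mkO_sum Finset.univ (g := fun i x => a i x * f x i) (fun i => (ha i).mul (coord_analytic hf i)), eq_comm, mkO_eq] at hc
  exact hc

theorem id_coord_analytic (i : Fin n) : AnalyticAt ℂ (fun x : Cn n => x i) 0 :=
  coord_analytic (f := fun x : Cn n => x) analyticAt_id i

theorem exists_poly_mem {A : Type*} [CommRing A] [Algebra ℂ A] (I : Ideal A)
    (hfin : Module.rank ℂ (A ⧸ I) < Cardinal.aleph0) (X : A) :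
    ∃ P : Polynomial ℂ, P ≠ 0 ∧ Polynomial.aeval X P ∈ I := by
  have hfd : Module.Finite ℂ (A ⧸ I) := Module.rank_lt_aleph0_iff.1 hfin
  obtain ⟨P, hm, hP⟩ := Algebra.IsIntegral.isIntegral (R := ℂ) (Ideal.Quotient.mk I X)
  refine ⟨P, hm.ne_zero, ?_⟩
  rw [← Ideal.Quotient.eq_zero_iff_mem, ← hP]
  exact (Polynomial.aeval_algHom_apply (Ideal.Quotient.mkₐ ℂ I) X P).symm

theorem exists_lift_basis {A : Type*} [CommRing A] [Algebra ℂ A] (I : Ideal A)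
    (hfin : Module.rank ℂ (A ⧸ I) < Cardinal.aleph0) :
    ∃ m : ℕ, Module.rank ℂ (A ⧸ I) = m ∧ ∃ b : Fin m → A, ∀ G : A, ∃ c : Fin m → ℂ,
      G - ∑ j, c j • b j ∈ I := by
  have hfd : Module.Finite ℂ (A ⧸ I) := Module.rank_lt_aleph0_iff.1 hfin
  refine ⟨Module.finrank ℂ (A ⧸ I), (Module.finrank_eq_rank _ _).symm, ?_⟩
  let B := Module.finBasis ℂ (A ⧸ I)
  choose b hb using fun j => Ideal.Quotient.mk_surjective (I := I) (B j)
  refine ⟨b, fun G => ⟨B.repr (Ideal.Quotient.mk I G), ?_⟩⟩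
  rw [← Ideal.Quotient.eq_zero_iff_mem]
  change Ideal.Quotient.mkₐ ℂ I _ = 0
  rw [map_sub, map_sum]
  simp only [map_smul]
  have : ∀ j, Ideal.Quotient.mkₐ ℂ I (b j) = B j := hb
  simp only [this]
  rw [B.sum_repr]
  exact sub_self _

theorem rank_quot_le {A : Type*} [CommRing A] [Algebra ℂ A] {I J : Ideal A} (h : I ≤ J) :
    Module.rank ℂ (A ⧸ J) ≤ Module.rank ℂ (A ⧸ I) :=
  LinearMap.rank_le_of_surjective (Ideal.Quotient.factorₐ ℂ h).toLinearMap
    (Ideal.Quotient.factor_surjective h)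

theorem coord_pow_mem {f : Cn n → Cn p} (hfin : FiniteGerm f) (i : Fin n) :
    ∃ s : ℕ, mkO (fun x : Cn n => x i) (id_coord_analytic i) ^ s ∈ coordIdeal f := by
  set X := mkO (fun x : Cn n => x i) (id_coord_analytic i)
  obtain ⟨P, hP0, hPX⟩ := exists_poly_mem (coordIdeal f) hfin X
  obtain ⟨q, hq, hqd⟩ := Polynomial.exists_eq_pow_rootMultiplicity_mul_and_not_dvd P hP0 0
  refine ⟨P.rootMultiplicity 0, ?_⟩
  rw [map_zero, sub_zero] at hq hqd
  rw [hq, map_mul, map_pow, Polynomial.aeval_X] at hPX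
  have hu : IsUnit (Polynomial.aeval X q) := by
    have hq0 : q.coeff 0 ≠ 0 := fun h => hqd (Polynomial.X_dvd_iff.2 h)
    obtain ⟨h, hh, hH⟩ := mkO_surj (Polynomial.aeval X q.divX)
    have : Polynomial.aeval X q = mkO (fun x => h x * x i + q.coeff 0 * 1)
        ((hh.mul (id_coord_analytic i)).add (analyticAt_const.mul analyticAt_const)) := by
      conv_lhs => rw [← Polynomial.divX_mul_X_add q]
      rw [map_add, map_mul, Polynomial.aeval_X, Polynomial.aeval_C, hH,
        Algebra.algebraMap_eq_smul_one]
      rfl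
    rw [this]
    exact mkO_isUnit _ (by simpa using hq0)
  exact (Ideal.mul_unit_mem_iff_mem _ hu).1 hPX

end

section
variable {n p : ℕ}

theorem pd_small {P : Cn n → Prop} (h : ∀ᶠ x in 𝓝 0, P x) :
    ∀ᶠ r in 𝓝[>] (0:ℝ), ∀ x ∈ PD n r, P (WithLp.toLp 2 x) := by
  have hc : Tendsto (fun x : Fin n → ℂ => (WithLp.toLp 2 x : Cn n)) (𝓝 0) (𝓝 0) :=
    ((PiLp.continuousLinearEquiv 2 ℂ (fun _ : Fin n => ℂ)).symm.continuous.tendsto' 0 0 (map_zero _))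
  obtain ⟨ε, hε, H⟩ := Metric.eventually_nhds_iff.1 (hc.eventually h)
  filter_upwards [Ioo_mem_nhdsGT hε] with r hr x hx
  apply H
  rw [dist_pi_lt_iff hε]
  intro i
  simpa using (hx i).trans hr.2

theorem shb_small {g : Cn n → ℂ} (hg : AnalyticAt ℂ g 0) :
    ∀ᶠ r in 𝓝[>] (0:ℝ), SHb n r (fun x => g (WithLp.toLp 2 x)) := by
  have h1 : ∀ᶠ x in 𝓝 (0 : Cn n), ‖g x‖ < ‖g 0‖ + 1 :=
    hg.continuousAt.norm.eventually_lt continuousAt_const (by simp)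
  filter_upwards [pd_small h1, pd_small hg.eventually_analyticAt] with r hr1 hr2
  refine ⟨‖g 0‖ + 1, by positivity, fun x hx => (hr1 x hx).le, fun x hx i t ht => ?_⟩
  have h2 := (hr2 _ (PD_update hx i ht)).differentiableAt
  have h3 : DifferentiableAt ℂ (fun t => (WithLp.toLp 2 (Function.update x i t) : Cn n)) t :=
    (PiLp.continuousLinearEquiv 2 ℂ (fun _ : Fin n => ℂ)).symm.differentiableAt.comp t
      (hasFDerivAt_update x t).differentiableAt
  exact (h2.comp t h3).differentiableWithinAt

theorem monoF_analytic (α : Fin n → ℕ) : AnalyticAt ℂ (fun x : Cn n => monoF α x.ofLp) 0 :=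
  Finset.univ.analyticAt_fun_prod fun i _ => (id_coord_analytic i).pow _

theorem fibre_bound {f : Cn n → Cn p} (hf0 : f 0 = 0) (hf : AnalyticAt ℂ f 0)
    (hfin : FiniteGerm f) :
    ∃ m : ℕ, multGerm f = m ∧ ∃ V ∈ 𝓝 (0 : Cn n), ∀ y, ∀ Z : Finset (Cn n),
      (∀ z ∈ Z, z ∈ V ∧ f z = y) → Z.card ≤ m := by
  obtain ⟨m, hm, b, hb⟩ := exists_lift_basis (coordIdeal f) hfin
  refine ⟨m, hm, ?_⟩
  choose B hB hbB using fun j => mkO_surj (b j)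
  choose s hs using coord_pow_mem hfin
  set N := ∑ i, s i with hN
  have hpow : ∀ k : Fin n, ∃ e : Fin p → Cn n → ℂ, (∀ i, AnalyticAt ℂ (e i) 0) ∧
      ∀ᶠ x : Cn n in 𝓝 0, x k ^ N = ∑ i, e i x * f x i := by
    intro k
    have hle : s k ≤ N := Finset.single_le_sum (fun i _ => Nat.zero_le (s i)) (Finset.mem_univ k)
    have := Ideal.pow_mem_of_pow_mem _ (hs k) hle
    rw [mkO_pow] at this
    exact mem_coordIdeal hf _ this
  have hmon : ∀ α : Fin n → Fin (N+1), ∃ c : Fin m → ℂ, ∃ a : Fin p → Cn n → ℂ,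
      (∀ i, AnalyticAt ℂ (a i) 0) ∧ ∀ᶠ x : Cn n in 𝓝 0,
        monoF (fun i => (α i : ℕ)) x.ofLp = ∑ j, c j * B j x + ∑ i, a i x * f x i := by
    intro α
    have hA := monoF_analytic (fun i => (α i : ℕ))
    obtain ⟨c, hc⟩ := hb (mkO _ hA)
    have hS : AnalyticAt ℂ (fun x => ∑ j, c j * B j x) 0 :=
      Finset.univ.analyticAt_fun_sum fun j _ => analyticAt_const.mul (hB j)
    have e1 : ∑ j, c j • b j = mkO _ hS := by
      simp only [hbB, mkO_smul]
      exact mkO_sum Finset.univ (g := fun j x => c j * B j x) (fun j => analyticAt_const.mul (hB j))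
    have e2 : mkO _ hA - ∑ j, c j • b j = mkO _ (hA.sub hS) := by rw [e1]; rfl
    rw [e2] at hc
    obtain ⟨a, ha, hax⟩ := mem_coordIdeal hf _ hc
    refine ⟨c, a, ha, ?_⟩
    filter_upwards [hax] with x hx
    rw [← hx]
    simp
  choose e he hex using hpow
  choose c a ha hax using hmon
  have E1 : ∀ᶠ r in 𝓝[>] (0:ℝ), ∀ k, (∀ i, SHb n r (fun x => e k i (WithLp.toLp 2 x))) ∧
      ∀ x ∈ PD n r, x k ^ N = ∑ i, e k i (WithLp.toLp 2 x) * f (WithLp.toLp 2 x) i :=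
    eventually_all.2 fun k => (eventually_all.2 fun i => shb_small (he k i)).and (pd_small (hex k))
  have E2 : ∀ᶠ r in 𝓝[>] (0:ℝ), ∀ α, (∀ i, SHb n r (fun x => a α i (WithLp.toLp 2 x))) ∧
      ∀ x ∈ PD n r, monoF (fun i => (α i : ℕ)) x = ∑ j, c α j * B j (WithLp.toLp 2 x) +
        ∑ i, a α i (WithLp.toLp 2 x) * f (WithLp.toLp 2 x) i :=
    eventually_all.2 fun k => (eventually_all.2 fun i => shb_small (ha k i)).and (pd_small (hax k))
  obtain ⟨r, hr, H1, H2⟩ := ((eventually_mem_nhdsWithin (a := (0:ℝ)) (s := Ioi 0)).and (E1.and E2)).exists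
  have hr : 0 < r := hr
  obtain ⟨C, hC, hdiv⟩ := division (n := n) (r := r) (b := fun j x => B j (WithLp.toLp 2 x))
    (f := fun i x => f (WithLp.toLp 2 x) i) hr N
    (by
      intro α hα
      obtain ⟨h1, h2⟩ := H2 (fun i => ⟨α i, Nat.lt_succ_of_le (hα i)⟩)
      choose K hK hK' using h1
      refine ⟨∑ i, K i + 1, ?_, c _, _, fun i => (hK' i).mono ?_, h2⟩
      · have := Finset.sum_nonneg (fun i (_ : i ∈ Finset.univ) => (hK i).le)
        linarith
      · have := Finset.single_le_sum (fun i (_ : i ∈ Finset.univ) => (hK i).le) (Finset.mem_univ i)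
        linarith)
    (fun k => ⟨_, (H1 k).1, (H1 k).2⟩)
  have V1 : ∀ᶠ x : Cn n in 𝓝 0, ∀ i, ‖x i‖ < r := by
    refine eventually_all.2 fun i => ?_
    exact (id_coord_analytic i).continuousAt.norm.eventually_lt continuousAt_const (by simpa using hr)
  have V2 : ∀ᶠ x : Cn n in 𝓝 0, (∑ i, ‖f x i‖) * C < 1 / 2 := by
    refine ContinuousAt.eventually_lt (f := fun x => (∑ i, ‖f x i‖) * C) (g := fun _ => 1/2)
      ?_ continuousAt_const ?_
    · exact (tendsto_finsetSum _ fun i _ => (coord_analytic hf i).continuousAt.norm).mul_const _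
    · simp [hf0]
  refine ⟨_, V1.and V2, fun y Z hZ => ?_⟩
  rcases Z.eq_empty_or_nonempty with rfl | ⟨z0, hz0⟩
  · simp
  have hy : (∑ i, ‖y i‖) * C ≤ 1 / 2 := by
    have := (hZ z0 hz0).1.2
    rw [(hZ z0 hz0).2] at this
    exact this.le
  have := fibre_card hC hdiv y.ofLp hy (Z.map ⟨fun z : Cn n => z.ofLp, WithLp.ofLp_injective 2⟩) (by
    intro z hz
    obtain ⟨w, hw, rfl⟩ := Finset.mem_map.1 hz
    refine ⟨(hZ w hw).1.1, fun i => ?_⟩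
    simp [(hZ w hw).2])
  simpa using this

theorem mult_le_gd {f : Cn n → Cn (n+1)} (hf : AnalyticAt ℂ f 0) : multGerm f ≤ gdGerm f := by
  refine le_csInf ?_ ?_
  · obtain ⟨π, hπ⟩ : ∃ π : Cn (n+1) →ₗ[ℂ] Cn n, Function.Surjective π := by
      let π : Cn (n+1) →ₗ[ℂ] Cn n :=
        (WithLp.linearEquiv 2 ℂ (Fin n → ℂ)).symm.toLinearMap ∘ₗ
          (LinearMap.funLeft ℂ ℂ (Fin.castSucc : Fin n → Fin (n+1))) ∘ₗ
          (WithLp.linearEquiv 2 ℂ (Fin (n+1) → ℂ)).toLinearMap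
      refine ⟨π, ?_⟩
      exact (WithLp.linearEquiv 2 ℂ (Fin n → ℂ)).symm.surjective.comp
        ((LinearMap.funLeft_surjective_of_injective ℂ ℂ _ (Fin.castSucc_injective n)).comp
          (WithLp.linearEquiv 2 ℂ (Fin (n+1) → ℂ)).surjective)
    exact ⟨_, π, hπ, rfl⟩
  · rintro _ ⟨π, hπ, rfl⟩
    refine rank_quot_le ?_
    have hπf : AnalyticAt ℂ (fun x => π (f x)) 0 :=
      ((LinearMap.toContinuousLinearMap π).analyticAt _).comp hf
    rw [coordIdeal_eq hπf, Ideal.span_le]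
    rintro _ ⟨i, rfl⟩
    set M : Fin (n+1) → ℂ := fun j => π (EuclideanSpace.single j 1) i with hM
    have key : mkO (fun x => π (f x) i) (coord_analytic hπf i) =
        ∑ j, M j • mkO (fun x => f x j) (coord_analytic hf j) := by
      simp only [mkO_smul]
      rw [mkO_sum Finset.univ (g := fun j x => M j * f x j)
        (fun j => analyticAt_const.mul (coord_analytic hf j)), mkO_eq]
      refine Eventually.of_forall fun x => ?_
      have hx : f x = ∑ j, f x j • EuclideanSpace.single j (1:ℂ) := by
        ext k
        simp [Pi.single_apply]
      dsimp only
      conv_lhs => rw [hx, map_sum]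
      simp [hM, mul_comm]
    dsimp only
    rw [SetLike.mem_coe, key]
    refine Ideal.sum_mem _ fun j _ => ?_
    rw [Algebra.smul_def]
    exact Ideal.mul_mem_left _ _ (Ideal.subset_span ⟨j, rfl⟩)
end

section
theorem finite_of_card_le {α : Type*} {S : Set α} {m : ℕ}
    (h : ∀ Z : Finset α, (∀ z ∈ Z, z ∈ S) → Z.card ≤ m) : S.Finite ∧ S.ncard ≤ m := by
  have hf : S.Finite := by
    by_contra hinf
    obtain ⟨Z, hZ, hc⟩ := Set.Infinite.exists_subset_card_eq hinf (m+1)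
    have := h Z hZ
    omega
  refine ⟨hf, ?_⟩
  rw [Set.ncard_eq_toFinset_card S hf]
  exact h _ (by simp)

theorem exists_goodRep {n p : ℕ} {f : Cn n → Cn p} (hf0 : f 0 = 0) (hf : AnalyticAt ℂ f 0)
    {m : ℕ} {V : Set (Cn n)} (hV : V ∈ 𝓝 0)
    (hZ : ∀ y, ∀ Z : Finset (Cn n), (∀ z ∈ Z, z ∈ V ∧ f z = y) → Z.card ≤ m) :
    ∃ U B, GoodRep f U B ∧ (0 : Cn n) ∈ U ∧ U ⊆ V := by
  have hfinV : {x ∈ V | f x = 0}.Finite := (finite_of_card_le (m := m) fun Z h => hZ 0 Z h).1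
  have h1 : ({x ∈ V | f x = 0} \ {0})ᶜ ∈ 𝓝 (0 : Cn n) :=
    (hfinV.subset diff_subset).isClosed.isOpen_compl.mem_nhds (by simp)
  obtain ⟨ε, hε, hball⟩ := Metric.nhds_basis_closedBall.mem_iff.1
    (inter_mem (inter_mem hV h1) hf.eventually_analyticAt)
  have han : ∀ x ∈ Metric.closedBall (0 : Cn n) ε, AnalyticAt ℂ f x := fun x hx => (hball hx).2
  have hcont : ContinuousOn f (Metric.closedBall 0 ε) := fun x hx =>
    (han x hx).continuousAt.continuousWithinAt
  have hzero : ∀ x ∈ Metric.closedBall (0 : Cn n) ε, f x = 0 → x = 0 := by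
    intro x hx hfx
    by_contra hne
    exact (hball hx).1.2 ⟨⟨(hball hx).1.1, hfx⟩, hne⟩
  obtain ⟨δ, hδ, hsph⟩ : ∃ δ > 0, ∀ x ∈ Metric.sphere (0 : Cn n) ε, δ ≤ ‖f x‖ := by
    rcases (Metric.sphere (0 : Cn n) ε).eq_empty_or_nonempty with he | hne
    · exact ⟨1, one_pos, by simp [he]⟩
    · obtain ⟨x, hx, hmin⟩ := (isCompact_sphere (0 : Cn n) ε).exists_isMinOn hne
        (hcont.norm.mono Metric.sphere_subset_closedBall)
      refine ⟨‖f x‖, norm_pos_iff.2 fun h => ?_, fun y hy => hmin hy⟩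
      have := hzero x (Metric.sphere_subset_closedBall hx) h
      subst this
      simp at hx
      exact hε.ne hx
  set U0 : Set (Cn n) := Metric.ball 0 ε ∩ f ⁻¹' Metric.ball 0 δ with hU0
  have hU0o : IsOpen U0 :=
    (hcont.mono Metric.ball_subset_closedBall).isOpen_inter_preimage Metric.isOpen_ball
      Metric.isOpen_ball
  have h0 : (0 : Cn n) ∈ U0 := ⟨Metric.mem_ball_self hε, by simpa [hf0] using hδ⟩
  set U := connectedComponentIn U0 0 with hU
  have hUU0 : U ⊆ U0 := connectedComponentIn_subset _ _
  have hclb : closure U ⊆ Metric.closedBall 0 ε :=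
    closure_minimal ((hUU0.trans inter_subset_left).trans Metric.ball_subset_closedBall)
      Metric.isClosed_closedBall
  refine ⟨U, Metric.ball 0 δ, ⟨hU0o.connectedComponentIn, isPreconnected_connectedComponentIn,
    Metric.isOpen_ball, fun x hx => (hUU0 hx).2,
    (isCompact_closedBall (0 : Cn n) ε).of_isClosed_subset isClosed_closure hclb,
    hcont.mono hclb, ?_, fun x hx => han x (hclb (subset_closure hx)), ?_⟩,
    mem_connectedComponentIn h0, fun x hx => (hball (hclb (subset_closure hx))).1.1⟩
  · intro x hx hfx
    have hxU0 : x ∈ U0 := by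
      refine ⟨?_, hfx⟩
      rcases (Metric.mem_closedBall.1 (hclb hx)).lt_or_eq with h | h
      · exact h
      · have := hsph x h
        rw [mem_ball_zero_iff] at hfx
        linarith
    have hpre : IsPreconnected (insert x U) :=
      isPreconnected_connectedComponentIn.subset_closure (subset_insert _ _)
        (insert_subset hx subset_closure)
    exact hpre.subset_connectedComponentIn (mem_insert_of_mem _ (mem_connectedComponentIn h0))
      (insert_subset hxU0 hUU0) (mem_insert _ _)
  · intro y
    exact (finite_of_card_le (m := m) fun Z h => hZ y Z fun z hz =>
      ⟨(hball (hclb (subset_closure (h z hz).1))).1.1, (h z hz).2⟩).1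
end

/-- For a finite holomorphic map germ `f : (ℂⁿ,0) → (ℂⁿ⁺¹,0)` with
irreducible image, `deg f ≤ mult f ≤ gd f`. -/
theorem deg_le_mult_le_gd (n : ℕ) (f : Cn n → Cn (n+1))
    (hf0 : f 0 = 0) (hfa : AnalyticAt ℂ f 0) (hfin : FiniteGerm f)
    (hirr : ImageIrreducible f) :
    (∃ d : ℕ, HasDeg f d ∧ (d : Cardinal) ≤ multGerm f) ∧ multGerm f ≤ gdGerm f := by
  refine ⟨?_, mult_le_gd hfa⟩
  obtain ⟨m, hm, V, hV, hZ⟩ := fibre_bound hf0 hfa hfin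
  rw [hm]
  cases n with
  | zero =>
    refine ⟨1, ⟨univ, isOpen_univ, mem_univ _, univ, isOpen_univ, ?_, ?_⟩, ?_⟩
    · rw [inter_univ]
      exact subset_closure
    · rintro y ⟨⟨x, -, rfl⟩, -⟩
      rw [Set.ncard_eq_one]
      refine ⟨x, ?_⟩
      ext z
      simp [Subsingleton.elim z x]
    · have := hZ 0 {0} (by simp [hf0, mem_of_mem_nhds hV])
      exact_mod_cast this
  | succ k =>
    obtain ⟨U, B, hG, h0, hUV⟩ := exists_goodRep hf0 hfa hV hZ
    obtain ⟨d, W, hW, hcl, ⟨y, hy⟩, hcount⟩ :=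
      hG.generic_count (k := k) (by simp) (by simp) ⟨0, h0⟩
    refine ⟨d, ⟨U, hG.openU, h0, W, hW, hcl, hcount⟩, ?_⟩
    have h1 := (finite_of_card_le (S := {x ∈ U | f x = y}) (m := m) fun Z h => hZ y Z fun z hz =>
      ⟨hUV (h z hz).1, (h z hz).2⟩).2
    rw [hcount y hy] at h1
    exact_mod_cast h1
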